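/- Let f, g : X → Y be maps of simplicial sets. If f and g are strongly homotopic, then the induced maps of pseudo-compact dg algebras f*, g* : C*(Y) → C*(X) on normalized cochains are strongly homotopic. Consequently, if two simplicial sets X and Y are strongly homotopy equivalent, then the pseudo-compact dg algebras C*(X) and C*(Y) are strongly homotopy equivalent. -/

import Mathlib

open DirectSum

/-- A (cohomologically graded) differential graded algebra over a commutative ring `k`:
a `ℤ`-graded `k`-algebra equipped with a square-zero degree `+1` differential
satisfying the graded Leibniz rule. -/
structure DGA (k : Type) [CommRing k] : Type 1 where
  A : Type
  [ringA : Ring A]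
  [algA : Algebra k A]
  gr : ℤ → Submodule k A
  [gradedA : GradedRing gr]
  d : A →ₗ[k] A
  d_sq : ∀ a, d (d a) = 0
  d_mem : ∀ (i : ℤ), ∀ a ∈ gr i, d a ∈ gr (i + 1)
  leibniz : ∀ (i : ℤ), ∀ a ∈ gr i, ∀ b, d (a * b) = d a * b + (((-1 : ℤˣ) ^ i : ℤˣ) : ℤ) • (a * d b)

attribute [instance] DGA.ringA DGA.algA DGA.gradedA

namespace DGA

variable {k : Type} [CommRing k]

/-- A Maurer-Cartan element of a dg algebra: a degree `1` element `x` with `d x + x² = 0`. -/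
def IsMC (A : DGA k) (x : A.A) : Prop := x ∈ A.gr 1 ∧ A.d x + x * x = 0

/-- The set of Maurer-Cartan elements of `A`. -/
def MCEl (A : DGA k) : Type := {x : A.A // A.IsMC x}

/-- The gauge action of an invertible element `g` on `x`:  `g·x = g x g⁻¹ - (d g) g⁻¹`. -/
def GaugeAct (A : DGA k) (g : (A.A)ˣ) (x : A.A) : A.A :=
  (g : A.A) * x * ((g⁻¹ : (A.A)ˣ) : A.A) - A.d (g : A.A) * ((g⁻¹ : (A.A)ˣ) : A.A)

/-- Gauge equivalence of elements of a dg algebra: `y = g·x` for some invertible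
degree-zero `g`. -/
def GaugeEquiv (A : DGA k) (x y : A.A) : Prop :=
  ∃ g : (A.A)ˣ, (g : A.A) ∈ A.gr 0 ∧ y = A.GaugeAct g x

/-- The Maurer-Cartan moduli set: Maurer-Cartan elements modulo gauge equivalence. -/
def MCmod (A : DGA k) : Type := Quot (fun x y : A.MCEl => A.GaugeEquiv x.1 y.1)

/-- `a` is cohomologous to `1` in the twisted algebra `A^x` (with differential `d + [x,-]`);
here `a` has degree `0` so the twisted differential of the degree `-1` element `s`
is `d s + x s + s x`. -/
def CohomologousToOne (A : DGA k) (x a : A.A) : Prop :=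
  ∃ s ∈ A.gr (-1 : ℤ), a - 1 = A.d s + (x * s + s * x)

/-- Homotopy gauge equivalence of Maurer-Cartan elements: the one-sided twisted modules
`A^{[x]}` and `A^{[y]}` are homotopy equivalent as right dg `A`-modules, explicitly:
there are degree-zero `g`, `h` intertwining the twisted differentials whose composites
are cohomologous to `1` in `A^x`, resp. `A^y`. -/
def HomotopyGaugeEquiv (A : DGA k) (x y : A.A) : Prop :=
  ∃ g ∈ A.gr 0, ∃ h ∈ A.gr 0,
    A.d g + y * g - g * x = 0 ∧
    A.d h + x * h - h * y = 0 ∧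
    A.CohomologousToOne x (h * g) ∧
    A.CohomologousToOne y (g * h)

/-- The Maurer-Cartan homotopy moduli set: MC elements modulo homotopy gauge
equivalence. -/
def MChmod (A : DGA k) : Type := Quot (fun x y : A.MCEl => A.HomotopyGaugeEquiv x.1 y.1)

open scoped Classical in
/-- The parity (Koszul sign) operator of a graded algebra: `a ↦ Σᵢ (-1)ⁱ aᵢ`. -/
noncomputable def parity (A : DGA k) (a : A.A) : A.A :=
  (DirectSum.decompose A.gr a).sum (fun i x => (((-1 : ℤˣ) ^ i : ℤˣ) : ℤ) • (x : A.A))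

end DGA

/-- A morphism of dg algebras: an algebra map preserving the grading and the differential. -/
structure DGAHom {k : Type} [CommRing k] (A B : DGA k) where
  toFun : A.A →ₐ[k] B.A
  map_gr : ∀ (i : ℤ), ∀ a ∈ A.gr i, toFun a ∈ B.gr i
  map_d : ∀ a, toFun (A.d a) = B.d (toFun a)

namespace DGAHom
variable {k : Type} [CommRing k]

def comp {A B C : DGA k} (g : DGAHom B C) (f : DGAHom A B) : DGAHom A C where
  toFun := g.toFun.comp f.toFun
  map_gr := fun i a ha => g.map_gr i _ (f.map_gr i a ha)
  map_d := fun a => by simp [f.map_d, g.map_d]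

def id' (A : DGA k) : DGAHom A A :=
  ⟨AlgHom.id k A.A, fun _ _ h => h, fun _ => rfl⟩

end DGAHom


/-! ## Topological simplices and singular simplices -/

/-- The standard topological `n`-simplex. -/
def TopSimplex (n : ℕ) : Type :=
  {f : Fin (n + 1) → ℝ // (∀ i, 0 ≤ f i) ∧ ∑ i, f i = 1}

instance (n : ℕ) : TopologicalSpace (TopSimplex n) :=
  inferInstanceAs (TopologicalSpace {f : Fin (n + 1) → ℝ // (∀ i, 0 ≤ f i) ∧ ∑ i, f i = 1})

/-- The affine map of topological simplices induced by a map of vertices. -/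
def vertAffine {m n : ℕ} (v : Fin (m + 1) → Fin (n + 1)) :
    C(TopSimplex m, TopSimplex n) where
  toFun f := ⟨fun j => ∑ i ∈ Finset.univ.filter (fun i => v i = j), f.1 i,
    ⟨fun j => Finset.sum_nonneg fun i _ => f.2.1 i, by
      rw [Finset.sum_fiberwise_of_maps_to (fun i _ => Finset.mem_univ (v i)) f.1]
      exact f.2.2⟩⟩
  continuous_toFun := by
    apply Continuous.subtype_mk
    exact continuous_pi fun j => continuous_finset_sum _ fun i _ =>
      (continuous_apply i).comp continuous_subtype_val

/-- The `i`-th face inclusion of topological simplices. -/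
def faceMap {n : ℕ} (i : Fin (n + 2)) : C(TopSimplex n, TopSimplex (n + 1)) :=
  vertAffine fun j => i.succAbove j

/-- The `i`-th degeneracy (collapse) map of topological simplices. -/
def degenMap {n : ℕ} (i : Fin (n + 1)) : C(TopSimplex (n + 1), TopSimplex n) :=
  vertAffine fun j => i.predAbove j

/-- The inclusion of the front `p`-face of the `n`-simplex. -/
def frontMap (p n : ℕ) (h : p ≤ n) : C(TopSimplex p, TopSimplex n) :=
  vertAffine fun j => Fin.castLE (by omega) j

/-- The inclusion of the back `q`-face of the `n`-simplex. -/
def backMap (q n : ℕ) (h : q ≤ n) : C(TopSimplex q, TopSimplex n) :=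
  vertAffine fun j : Fin (q + 1) => (⟨n - q + (j : ℕ), by have := j.isLt; omega⟩ : Fin (n + 1))

/-- The `j`-th vertex of the topological `n`-simplex. -/
def vertexPt (n : ℕ) (j : Fin (n + 1)) : TopSimplex n :=
  ⟨fun i => if i = j then 1 else 0,
    ⟨fun i => by dsimp only; split <;> norm_num, by simp⟩⟩

/-- The set of singular `n`-simplices of a topological space. -/
def SingN (X : Type) [TopologicalSpace X] (n : ℕ) : Type := C(TopSimplex n, X)

/-- A singular `(n+1)`-simplex is degenerate if it factors through a degeneracy map. -/
def IsDegenSimplex {X : Type} [TopologicalSpace X] {n : ℕ} (σ : SingN X (n + 1)) : Prop :=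
  ∃ (i : Fin (n + 1)) (τ : SingN X n), σ = (τ : C(TopSimplex n, X)).comp (degenMap i)

/-- The constant singular `0`-simplex of `[0,1]` at `0`. -/
def const0 : SingN unitInterval 0 := ContinuousMap.const _ 0

/-- The constant singular `0`-simplex of `[0,1]` at `1`. -/
def const1 : SingN unitInterval 0 := ContinuousMap.const _ 1

/-! ## Strong homotopy of dg algebra morphisms -/

/-- An elementary strong homotopy between two dg algebra maps `f, g : A → B`: a dg
algebra map `H : A → B ⊗ I*` (where `I*` is the normalized singular cochain algebra of
`[0,1]`, the tensor product being completed) restricting to `f` and `g` at the two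
endpoints.  `B ⊗ I*` is identified with normalized `B`-valued singular cochains on
`[0,1]`, so `H` is given by its components `H a n σ ∈ B^{i-n}` for `a ∈ A^i` and `σ` a
singular `n`-simplex; multiplicativity is the Alexander-Whitney convolution formula
with Koszul signs, and compatibility with differentials uses the singular coboundary. -/
def IsElemStrongHomotopy {k : Type} [CommRing k] (A B : DGA k) (f g : A.A → B.A)
    (H : A.A → ∀ n, SingN unitInterval n → B.A) : Prop :=
  (∀ a b n σ, H (a + b) n σ = H a n σ + H b n σ) ∧
  (∀ (c : k) a n σ, H (c • a) n σ = c • H a n σ) ∧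
  (∀ a (n : ℕ) (i : Fin (n + 1)) (τ : SingN unitInterval n),
    H a (n + 1) (ContinuousMap.comp τ (degenMap i)) = 0) ∧
  (∀ (i : ℤ), ∀ a ∈ A.gr i, ∀ (n : ℕ) σ, H a n σ ∈ B.gr (i - (n : ℤ))) ∧
  (∀ σ, H 1 0 σ = 1) ∧ (∀ (n : ℕ) σ, H 1 (n + 1) σ = 0) ∧
  (∀ (i j : ℤ), ∀ a ∈ A.gr i, ∀ b ∈ A.gr j, ∀ (n : ℕ) (σ : SingN unitInterval n),
    H (a * b) n σ =
      ∑ p : Fin (n + 1),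
        (((-1 : ℤˣ) ^ (((p : ℕ) : ℤ) * (j - ((n : ℤ) - ((p : ℕ) : ℤ)))) : ℤˣ) : ℤ) •
          (H a (p : ℕ) (ContinuousMap.comp σ (frontMap (p : ℕ) n (Nat.le_of_lt_succ p.isLt))) *
            H b (n - (p : ℕ)) (ContinuousMap.comp σ (backMap (n - (p : ℕ)) n (by omega))))) ∧
  (∀ (i : ℤ), ∀ a ∈ A.gr i,
    (∀ σ : SingN unitInterval 0, H (A.d a) 0 σ = B.d (H a 0 σ)) ∧
    (∀ (n : ℕ) (σ : SingN unitInterval (n + 1)),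
      H (A.d a) (n + 1) σ =
        B.d (H a (n + 1) σ) +
          (((-1 : ℤˣ) ^ (i - (n : ℤ)) : ℤˣ) : ℤ) •
            ∑ i' : Fin (n + 2), (((-1 : ℤˣ) ^ (i' : ℕ) : ℤˣ) : ℤ) •
              H a n (ContinuousMap.comp σ (faceMap i')))) ∧
  (∀ a, H a 0 const0 = f a ∧ H a 0 const1 = g a)

/-- Two dg algebra morphisms are strongly homotopic if they are related by the
equivalence relation generated by elementary strong homotopies. -/
def StronglyHomotopicHoms {k : Type} [CommRing k] (A B : DGA k) :
    DGAHom A B → DGAHom A B → Prop :=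
  Relation.EqvGen (fun f g => ∃ H, IsElemStrongHomotopy A B f.toFun g.toFun H)

/-- Two dg algebras are strongly homotopy equivalent if there are dg algebra maps in
both directions whose composites are strongly homotopic to the identities. -/
def StronglyHomotopyEquivalent {k : Type} [CommRing k] (A B : DGA k) : Prop :=
  ∃ (f : DGAHom A B) (g : DGAHom B A),
    StronglyHomotopicHoms B B (f.comp g) (DGAHom.id' B) ∧
    StronglyHomotopicHoms A A (g.comp f) (DGAHom.id' A)

/-! ## Simplicial sets: products, cylinders and strong homotopy -/

open CategoryTheory Simplicial

/-- The objectwise product of two simplicial sets. -/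
def sprod (X Y : SSet) : SSet where
  obj m := X.obj m × Y.obj m
  map f := ↾(fun p => (X.map f p.1, Y.map f p.2))
  map_id := by
    intro m
    apply ConcreteCategory.hom_ext
    intro p
    exact Prod.ext (X.map_id_apply m p.1) (Y.map_id_apply m p.2)
  map_comp := by
    intro a b c f g
    apply ConcreteCategory.hom_ext
    intro p
    exact Prod.ext (X.map_comp_apply f g p.1) (Y.map_comp_apply f g p.2)

/-- The singular simplicial set of the interval `[0,1]`. -/
noncomputable def Iset : SSet := TopCat.toSSet.obj (TopCat.of unitInterval)

/-- The constant simplex of the singular simplicial set of `[0,1]` at a point `c`. -/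
noncomputable def constSimp (c : unitInterval) (m : SimplexCategoryᵒᵖ) : Iset.obj m :=
  ULift.up (TopCat.ofHom (ContinuousMap.const _ c :
    C((SimplexCategory.toTop.obj m.unop : TopCat), (TopCat.of unitInterval : TopCat))))

/-- The inclusion `X → X × I` at the `0`-end of the cylinder. -/
noncomputable def cylIncl0 (X : SSet) : X ⟶ sprod X Iset where
  app m := ↾(fun x => (x, constSimp 0 m))
  naturality := by
    intro a b f
    apply ConcreteCategory.hom_ext
    intro x
    refine Prod.ext rfl ?_
    show Iset.map f (constSimp 0 a) = constSimp 0 b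
    rfl

/-- The inclusion `X → X × I` at the `1`-end of the cylinder. -/
noncomputable def cylIncl1 (X : SSet) : X ⟶ sprod X Iset where
  app m := ↾(fun x => (x, constSimp 1 m))
  naturality := by
    intro a b f
    apply ConcreteCategory.hom_ext
    intro x
    refine Prod.ext rfl ?_
    show Iset.map f (constSimp 1 a) = constSimp 1 b
    rfl

/-- An elementary strong homotopy between two maps of simplicial sets: a map from the
very good cylinder `X × I` (where `I` is the singular simplicial set of `[0,1]`, a
fibrant cylinder object for the point) restricting to the two maps at the ends. -/
noncomputable def SimpElemStrongHomotopy {X Y : SSet} (f g : X ⟶ Y) : Prop :=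
  ∃ h : sprod X Iset ⟶ Y, cylIncl0 X ≫ h = f ∧ cylIncl1 X ≫ h = g

/-- Two maps of simplicial sets are strongly homotopic if they are connected by a chain
of elementary strong homotopies. -/
noncomputable def SimpStronglyHomotopic {X Y : SSet} (f g : X ⟶ Y) : Prop :=
  Relation.EqvGen (fun p q : X ⟶ Y => SimpElemStrongHomotopy p q) f g

/-- Two simplicial sets are strongly homotopy equivalent if there are maps in both
directions whose composites are strongly homotopic to the identities. -/
noncomputable def SimpStronglyHomotopyEquivalent (X Y : SSet) : Prop :=
  ∃ (f : X ⟶ Y) (g : Y ⟶ X),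
    SimpStronglyHomotopic (g ≫ f) (𝟙 Y) ∧ SimpStronglyHomotopic (f ≫ g) (𝟙 X)

/-! ## The normalized cochain algebra of a simplicial set -/

open CategoryTheory Simplicial

/-- The morphism `[p] ⟶ [n]` of the simplex category selecting the front `p`-face. -/
def frontHom (p n : ℕ) (h : p ≤ n) : SimplexCategory.mk p ⟶ SimplexCategory.mk n :=
  SimplexCategory.mkHom ⟨fun j => Fin.castLE (by omega) j,
    fun _ _ hab => hab⟩

/-- The morphism `[q] ⟶ [n]` of the simplex category selecting the back `q`-face. -/
def backHom (q n : ℕ) (h : q ≤ n) : SimplexCategory.mk q ⟶ SimplexCategory.mk n :=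
  SimplexCategory.mkHom ⟨fun j => (⟨n - q + (j : ℕ), by have := j.isLt; omega⟩ : Fin (n + 1)),
    fun a b hab => by simp only [Fin.le_def] at hab ⊢; omega⟩

/-- `E` presents the dg algebra `CX` as the normalized cochain algebra `C*(X)` of the
simplicial set `X` over `k` (with the Alexander-Whitney cup product): via the component
maps `E`, homogeneous degree-`n` elements of `CX` correspond exactly to normalized
`k`-valued `n`-cochains on `X`, compatibly with the unit, the cup product, and the
simplicial coboundary. -/
def IsCochainPresentation {k : Type} [CommRing k] (X : SSet) (CX : DGA k)
    (E : CX.A → ∀ n : ℕ, X.obj (Opposite.op (SimplexCategory.mk n)) → k) : Prop :=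
  (∀ a b (n : ℕ) σ, E (a + b) n σ = E a n σ + E b n σ) ∧
  (∀ (c : k) a (n : ℕ) σ, E (c • a) n σ = c • E a n σ) ∧
  (∀ a (n : ℕ) (i : Fin (n + 1)) (τ : X.obj (Opposite.op (SimplexCategory.mk n))),
    E a (n + 1) (X.map (SimplexCategory.σ i).op τ) = 0) ∧
  (∀ (i : ℤ), i < 0 → CX.gr i = ⊥) ∧
  (∀ (m : ℤ), ∀ a ∈ CX.gr m, ∀ (n : ℕ) σ, (n : ℤ) ≠ m → E a n σ = 0) ∧
  (∀ (m : ℤ), ∀ a ∈ CX.gr m, (∀ (n : ℕ) σ, E a n σ = 0) → a = 0) ∧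
  (∀ c : X.obj (Opposite.op (SimplexCategory.mk 0)) → k,
    ∃ a ∈ CX.gr (0 : ℤ), ∀ σ, E a 0 σ = c σ) ∧
  (∀ (n : ℕ) (c : X.obj (Opposite.op (SimplexCategory.mk (n + 1))) → k),
    (∀ (i : Fin (n + 1)) (τ : X.obj (Opposite.op (SimplexCategory.mk n))),
      c (X.map (SimplexCategory.σ i).op τ) = 0) →
    ∃ a ∈ CX.gr ((n : ℤ) + 1), ∀ σ, E a (n + 1) σ = c σ) ∧
  (∀ σ, E 1 0 σ = 1) ∧ (∀ (n : ℕ) σ, E 1 (n + 1) σ = 0) ∧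
  (∀ (p q : ℕ), ∀ a ∈ CX.gr (p : ℤ), ∀ b ∈ CX.gr (q : ℤ),
    ∀ σ : X.obj (Opposite.op (SimplexCategory.mk (p + q))),
    E (a * b) (p + q) σ =
      E a p (X.map (frontHom p (p + q) (by omega)).op σ) *
        E b q (X.map (backHom q (p + q) (by omega)).op σ)) ∧
  (∀ (n : ℕ), ∀ a ∈ CX.gr (n : ℤ),
    ∀ σ : X.obj (Opposite.op (SimplexCategory.mk (n + 1))),
    E (CX.d a) (n + 1) σ =
      ∑ i : Fin (n + 2), (((-1 : ℤˣ) ^ (i : ℕ) : ℤˣ) : ℤ) •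
        E a n (X.map (SimplexCategory.δ i).op σ))

/-- The dg algebra map `C*(Y) → C*(X)` induced by a simplicial map `f : X → Y` is
characterized by `E_X (φ a) n σ = E_Y a n (f σ)`. -/
def IsPullbackHom {k : Type} [CommRing k] {X Y : SSet} (f : X ⟶ Y)
    {CX CY : DGA k}
    (EY : CY.A → ∀ n : ℕ, Y.obj (Opposite.op (SimplexCategory.mk n)) → k)
    (EX : CX.A → ∀ n : ℕ, X.obj (Opposite.op (SimplexCategory.mk n)) → k)
    (φ : DGAHom CY CX) : Prop :=
  ∀ a (n : ℕ) σ, EX (φ.toFun a) n σ = EY a n (f.app (Opposite.op (SimplexCategory.mk n)) σ)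


namespace EZ

section Lists
variable {k : Type} [CommRing k] {α β : Type}

/-- alternating sum over deletions of an entry -/
def D {γ : Type} (F : List γ → k) (l : List γ) : k :=
  ∑ i ∈ Finset.range l.length, (-1) ^ i * F (l.eraseIdx i)

lemma D_nil {γ : Type} (F : List γ → k) : D F [] = 0 := by simp [D]

lemma D_cons {γ : Type} (F : List γ → k) (x : γ) (l : List γ) :
    D F (x :: l) = F l - D (fun l => F (x :: l)) l := by
  simp only [D, List.length_cons]
  rw [Finset.sum_range_succ']
  simp [pow_succ, Finset.sum_neg_distrib]
  ring

/-- contribution of the constant path -/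
def base (xs : List α) (ys : List β) (c : k) : k :=
  if xs.length = 0 ∧ ys.length = 0 then c else 0

/-- correction term -/
def eps (xs : List α) (ys : List β) (c : k) : k :=
  if xs.length = 1 ∧ ys.length = 1 then c else 0

/-- signed sum over lattice paths -/
noncomputable def P (xs : List α) : List β → (List (α × β) → k) → k :=
  List.rec (motive := fun _ => List β → (List (α × β) → k) → k)
    (fun _ _ => 0)
    (fun x xs ihx ys => List.rec (motive := fun _ => (List (α × β) → k) → k)
      (fun _ => 0)
      (fun y ys ihy F =>
        base xs ys (F [(x, y)]) + ihx (y :: ys) (fun l => F ((x, y) :: l))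
          + (-1) ^ xs.length * ihy (fun l => F ((x, y) :: l))) ys) xs

/-- lattice paths -/
inductive IsPath : List α → List β → List (α × β) → Prop where
  /-- constant path -/
  | nil (x : α) (y : β) : IsPath [x] [y] [(x, y)]
  /-- horizontal step -/
  | horiz (x : α) (y : β) (xs ys l) : IsPath xs (y :: ys) l → IsPath (x :: xs) (y :: ys) ((x, y) :: l)
  /-- vertical step -/
  | vert (x : α) (y : β) (xs ys l) : IsPath (x :: xs) ys l → IsPath (x :: xs) (y :: ys) ((x, y) :: l)

@[simp] lemma P_nil_left (ys : List β) (F : List (α × β) → k) : P [] ys F = 0 := rfl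

@[simp] lemma P_nil_right (xs : List α) (F : List (α × β) → k) : P xs [] F = 0 := by
  cases xs <;> rfl

lemma P_cons (x : α) (y : β) (xs : List α) (ys : List β) (F : List (α × β) → k) :
    P (x :: xs) (y :: ys) F = base xs ys (F [(x, y)]) + P xs (y :: ys) (fun l => F ((x, y) :: l))
        + (-1) ^ xs.length * P (x :: xs) ys (fun l => F ((x, y) :: l)) := rfl

lemma P_congr (N : ℕ) : ∀ (xs : List α) (ys : List β), xs.length + ys.length = N →
    ∀ (F G : List (α × β) → k),
    (∀ l, IsPath xs ys l → F l = G l) → P xs ys F = P xs ys G := by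
  induction N with
  | zero =>
    intro xs ys h F G _
    have : xs = [] := List.length_eq_zero_iff.1 (by omega)
    subst this; simp
  | succ N ih =>
    intro xs ys h F G hFG
    cases xs with
    | nil => simp
    | cons x xs =>
      cases ys with
      | nil => simp
      | cons y ys =>
        simp only [List.length_cons] at h
        rw [P_cons, P_cons]
        congr 1
        · congr 1
          · rcases xs with _ | ⟨x', xs⟩
            · rcases ys with _ | ⟨y', ys⟩
              · simp [base, hFG _ (IsPath.nil x y)]
              · simp [base]
            · simp [base]
          · exact ih _ _ (by simp; omega) _ _ (fun l hl => hFG _ (IsPath.horiz x y xs ys l hl))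
        · congr 1
          exact ih _ _ (by simp; omega) _ _ (fun l hl => hFG _ (IsPath.vert x y xs ys l hl))

lemma P_congr' {xs : List α} {ys : List β} {F G : List (α × β) → k}
    (h : ∀ l, IsPath xs ys l → F l = G l) : P xs ys F = P xs ys G :=
  P_congr _ xs ys rfl F G h

lemma P_linear (N : ℕ) (c : k) : ∀ (xs : List α) (ys : List β), xs.length + ys.length = N →
    ∀ (F G : List (α × β) → k), P xs ys (fun l => F l + c * G l) = P xs ys F + c * P xs ys G := by
  induction N with
  | zero =>
    intro xs ys h F G
    have : xs = [] := List.length_eq_zero_iff.1 (by omega)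
    subst this; simp
  | succ N ih =>
    intro xs ys h F G
    cases xs with
    | nil => simp
    | cons x xs =>
      cases ys with
      | nil => simp
      | cons y ys =>
        simp only [List.length_cons] at h
        rw [P_cons, P_cons, P_cons, ih _ _ (by simp; omega), ih _ _ (by simp; omega)]
        have : base xs ys (F [(x, y)] + c * G [(x, y)])
            = base xs ys (F [(x, y)]) + c * base xs ys (G [(x, y)]) := by
          cases xs <;> cases ys <;> simp [base]
        rw [this]; ring

lemma P_add (xs : List α) (ys : List β) (F G : List (α × β) → k) :
    P xs ys (fun l => F l + G l) = P xs ys F + P xs ys G := by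
  simpa using P_linear _ 1 xs ys rfl F G

lemma P_zero (xs : List α) (ys : List β) :
    P xs ys (fun _ => (0 : k)) = 0 := by
  simpa using P_linear _ (-1) xs ys rfl (fun _ => (0 : k)) (fun _ => 0)

lemma P_smul (xs : List α) (ys : List β) (c : k) (G : List (α × β) → k) :
    P xs ys (fun l => c * G l) = c * P xs ys G := by
  simpa [P_zero] using P_linear _ c xs ys rfl (fun _ => (0 : k)) G

lemma P_sub (xs : List α) (ys : List β) (F G : List (α × β) → k) :
    P xs ys (fun l => F l - G l) = P xs ys F - P xs ys G := by
  simpa [sub_eq_add_neg] using P_linear _ (-1) xs ys rfl F G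

lemma P_map {α' β' : Type} (f : α → α') (g : β → β') (N : ℕ) :
    ∀ (xs : List α) (ys : List β), xs.length + ys.length = N →
    ∀ (F : List (α' × β') → k),
      P (xs.map f) (ys.map g) F = P xs ys (fun l => F (l.map (Prod.map f g))) := by
  induction N with
  | zero =>
    intro xs ys h F
    have : xs = [] := List.length_eq_zero_iff.1 (by omega)
    subst this; simp
  | succ N ih =>
    intro xs ys h F
    cases xs with
    | nil => simp
    | cons x xs =>
      cases ys with
      | nil => simp
      | cons y ys =>
        simp only [List.length_cons] at h
        have h1 := ih xs (y :: ys) (by simp; omega)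
        have h2 := ih (x :: xs) ys (by simp; omega)
        simp only [List.map_cons] at h1 h2 ⊢
        rw [P_cons, P_cons, h1, h2]
        have : base (xs.map f) (ys.map g) (F [(f x, g y)])
            = base xs ys (F [(f x, g y)]) := by
          cases xs <;> cases ys <;> simp [base]
        rw [this]
        simp

lemma D_congr {γ : Type} (l : List γ) : ∀ (F G : List γ → k),
    (∀ l', l'.length + 1 = l.length → F l' = G l') → D F l = D G l := by
  induction l with
  | nil => intros; simp [D_nil]
  | cons x l ih =>
    intro F G h
    simp only [D_cons]
    rw [h l (by simp), ih _ _ (fun l' hl' => h (x :: l') (by simp [← hl']))]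

lemma D_linear {γ : Type} (c : k) (l : List γ) : ∀ (F G : List γ → k),
    D (fun l => F l + c * G l) l = D F l + c * D G l := by
  induction l with
  | nil => intros; simp [D_nil]
  | cons x l ih =>
    intro F G
    simp only [D_cons]
    rw [ih]; ring

lemma D_add {γ : Type} (l : List γ) (F G : List γ → k) :
    D (fun l => F l + G l) l = D F l + D G l := by
  simpa using D_linear 1 l F G

lemma D_zero {γ : Type} (l : List γ)  :
    D (fun _ => (0 : k)) l = 0 := by
  simpa using D_linear (-1) l (fun _ => (0 : k)) (fun _ => 0)

lemma D_smul {γ : Type} (c : k) (l : List γ) (F : List γ → k) :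
    D (fun l => c * F l) l = c * D F l := by
  simpa [D_zero] using D_linear c l (fun _ => 0) F

lemma D_base_left (xs : List α) (ys : List β) (y : β) (c : k) :
    D (fun l => base l ys c) xs = eps xs (y :: ys) c := by
  rcases xs with _ | ⟨x, _ | ⟨x', xs⟩⟩
  · simp [D_cons, D_nil, eps]
  · cases ys <;> simp [D_cons, D_nil, eps, base]
  · have : ∀ (z : List α) (x : α), base (x :: z) ys c = 0 := by intros; simp [base]
    simp [D_cons, D_nil, this, eps, D_zero]

lemma D_base_right (xs : List α) (ys : List β) (x : α) (c : k) :
    D (fun l => base xs l c) ys = eps (x :: xs) ys c := by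
  rcases ys with _ | ⟨y, _ | ⟨y', ys⟩⟩
  · cases xs <;> simp [D_cons, D_nil, eps]
  · cases xs <;> simp [D_cons, D_nil, eps, base]
  · have : ∀ (z : List β) (y : β), base xs (y :: z) c = 0 := by intros; cases xs <;> simp [base]
    cases xs <;> simp [D_cons, D_nil, this, eps, D_zero]

theorem P_D (N : ℕ) : ∀ (xs : List α) (ys : List β), xs.length + ys.length = N →
    ∀ (F : List (α × β) → k),
    P xs ys (D F) = D (fun l => P l ys F) xs - (-1) ^ xs.length * D (fun l => P xs l F) ys
      + eps xs ys (F []) := by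
  induction N with
  | zero =>
    intro xs ys h F
    have : xs = [] := List.length_eq_zero_iff.1 (by omega)
    subst this; simp [D_cons, D_nil, D_zero, eps]
  | succ N ih =>
    intro xs ys h F
    cases xs with
    | nil => simp [D_cons, D_nil, D_zero, eps]
    | cons x xs =>
      cases ys with
      | nil => cases xs <;> simp [D_cons, D_nil, D_zero, eps]
      | cons y ys =>
        simp only [List.length_cons] at h
        have h1 := ih xs (y :: ys) (by simp; omega) (fun l => F ((x, y) :: l))
        have h2 := ih (x :: xs) ys (by simp; omega) (fun l => F ((x, y) :: l))
        have e1 : D (fun l => P l (y :: ys) F) (x :: xs) = P xs (y :: ys) F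
            - (eps xs (y :: ys) (F [(x, y)]) + D (fun l => P l (y :: ys) (fun l => F ((x, y) :: l))) xs
              - (-1) ^ xs.length * (P xs ys (fun l => F ((x, y) :: l))
                - D (fun l => P l ys (fun l => F ((x, y) :: l))) (x :: xs))) := by
          have : D (fun l => P (x :: l) (y :: ys) F) xs =
              D (fun l => base l ys (F [(x, y)]) + P l (y :: ys) (fun l => F ((x, y) :: l))
                + (- (-1) ^ xs.length) * P (x :: l) ys (fun l => F ((x, y) :: l))) xs := by
            apply D_congr
            intro l hl
            rw [P_cons, ← hl]; ring
          simp only [D_cons]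
          rw [this, D_linear, D_add, D_base_left xs ys y]
          ring
        have e2 : D (fun l => P (x :: xs) l F) (y :: ys) = P (x :: xs) ys F
            - (eps (x :: xs) ys (F [(x, y)])
              + (P xs ys (fun l => F ((x, y) :: l))
                - D (fun l => P xs l (fun l => F ((x, y) :: l))) (y :: ys))
              + (-1) ^ xs.length * D (fun l => P (x :: xs) l (fun l => F ((x, y) :: l))) ys) := by
          have : D (fun l => P (x :: xs) (y :: l) F) ys =
              D (fun l => base xs l (F [(x, y)]) + P xs (y :: l) (fun l => F ((x, y) :: l))
                + ((-1) ^ xs.length) * P (x :: xs) l (fun l => F ((x, y) :: l))) ys := by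
            apply D_congr
            intro l hl
            rw [P_cons]
          simp only [D_cons]
          rw [this, D_linear, D_add, D_base_right xs ys x]
          ring
        have e3 : base xs ys (D F [(x, y)]) = eps (x :: xs) (y :: ys) (F []) := by
          cases xs <;> cases ys <;> simp [base, eps, D_cons, D_nil]
        have hs : ((-1 : k) ^ xs.length) * (-1) ^ xs.length = 1 := by
          rw [← mul_pow]; simp
        rw [e1, e2, P_cons, e3]
        simp only [D_cons] at h1 h2 ⊢
        rw [P_sub, P_sub, h1, h2]
        simp only [List.length_cons, pow_succ]
        ring

theorem P_cut (r : ℕ) : ∀ (xs : List α) (ys : List β) (F G : List (α × β) → k), G [] = 0 →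
    P xs ys (fun l => F (l.take (r + 1)) * G (l.drop r)) =
      ∑ ab ∈ Finset.HasAntidiagonal.antidiagonal r, (-1) ^ (ab.2 * (xs.length - 1 - ab.1)) *
        (P (xs.take (ab.1 + 1)) (ys.take (ab.2 + 1)) F * P (xs.drop ab.1) (ys.drop ab.2) G) := by
  induction r with
  | zero =>
    intro xs ys F G hG
    cases xs with
    | nil => simp
    | cons x xs =>
      cases ys with
      | nil => simp
      | cons y ys =>
        have : P (x :: xs) (y :: ys) (fun l => F (l.take (0 + 1)) * G (l.drop 0))
          = P (x :: xs) (y :: ys) (fun l => F [(x, y)] * G l) := by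
          apply P_congr'
          intro l hl
          cases hl <;> simp
        rw [this, P_smul]
        simp [P_cons, base]
  | succ r ih =>
    intro xs ys F G hG
    cases xs with
    | nil => simp
    | cons x xs =>
      cases ys with
      | nil => simp
      | cons y ys =>
        rw [P_cons]
        simp only [List.take_succ_cons, List.drop_succ_cons]
        rw [ih xs (y :: ys) (fun l => F ((x, y) :: l)) G hG,
          ih (x :: xs) ys (fun l => F ((x, y) :: l)) G hG]
        have hb : ∀ ab ∈ Finset.HasAntidiagonal.antidiagonal (r + 1),
            base (xs.take ab.1) (ys.take ab.2) (F [(x, y)]) *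
              P ((x :: xs).drop ab.1) ((y :: ys).drop ab.2) G = 0 := by
          rintro ⟨a, b⟩ hab
          simp only [Finset.HasAntidiagonal.mem_antidiagonal] at hab
          dsimp only
          unfold base
          split_ifs with h
          · rcases a with _ | a
            · have : ys = [] := by
                rcases ys with _ | ⟨y', ys⟩
                · rfl
                · exfalso
                  have := h.2
                  simp at this
                  omega
              subst this
              rw [List.drop_eq_nil_of_le (as := [y]) (by simp; omega)]
              simp
            · have : xs = [] := by
                rcases xs with _ | ⟨y', ys⟩
                · rfl
                · exfalso
                  have := h.1
                  simp at this
              subst this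
              simp
          · simp
        have hL : base xs ys (F ((x, y) :: List.take (r + 1) []) * G (List.drop r [])) = 0 := by
          simp [hG, base]
        rw [hL]
        have key : ∀ ab ∈ Finset.HasAntidiagonal.antidiagonal (r + 1),
          (-1) ^ (ab.2 * ((x :: xs).length - 1 - ab.1)) *
            (P (x :: xs.take ab.1) (y :: ys.take ab.2) F *
              P ((x :: xs).drop ab.1) ((y :: ys).drop ab.2) G) =
          (-1) ^ (ab.2 * (xs.length - ab.1)) *
            (P (xs.take ab.1) (y :: ys.take ab.2) (fun l => F ((x, y) :: l)) *
              P ((x :: xs).drop ab.1) ((y :: ys).drop ab.2) G) +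
          (-1) ^ (ab.2 * (xs.length - ab.1)) * ((-1) ^ (xs.take ab.1).length *
            (P (x :: xs.take ab.1) (ys.take ab.2) (fun l => F ((x, y) :: l)) *
              P ((x :: xs).drop ab.1) ((y :: ys).drop ab.2) G)) := by
          intro ab hab
          rw [P_cons]
          have := hb ab hab
          simp only [List.length_cons, Nat.add_sub_cancel]
          linear_combination (-1) ^ (ab.2 * (xs.length - ab.1)) * this
        rw [Finset.sum_congr rfl key, Finset.sum_add_distrib, Finset.Nat.sum_antidiagonal_succ,
          Finset.Nat.sum_antidiagonal_succ']
        simp only [List.take_zero, P_nil_left, P_nil_right, zero_mul, mul_zero, zero_add,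
          List.drop_succ_cons, List.take_succ_cons]
        congr 1
        · apply Finset.sum_congr rfl
          intro ab _
          rw [Nat.sub_sub, Nat.add_comm 1]
        · rw [Finset.mul_sum]
          apply Finset.sum_congr rfl
          rintro ⟨a, b⟩ _
          dsimp only
          rcases Nat.lt_or_ge xs.length a with h | h
          · rw [List.drop_eq_nil_of_le (as := x :: xs) (by simp; omega)]
            simp
          · obtain ⟨c, hc⟩ := Nat.exists_eq_add_of_le h
            have e1 : (x :: xs).length - 1 - a = c := by simp; omega
            have e2 : (xs.take a).length = a := by simp; omega
            have e3 : xs.length - a = c := by omega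
            rw [e1, e2, e3, hc, add_mul, pow_add, pow_add]
            have hs : ((-1 : k) ^ c) * (-1) ^ c = 1 := by
              rw [← mul_pow]; simp
            ring



lemma P_single (xs : List α) (y : β) (hx : xs ≠ []) : ∀ (F : List (α × β) → k),
    P xs [y] F = F (xs.map (fun x => (x, y))) := by
  induction xs with
  | nil => exact absurd rfl hx
  | cons x xs ih =>
    intro F
    rw [P_cons]
    rcases xs with _ | ⟨x', xs⟩
    · simp [base]
    · rw [ih (by simp)]
      simp [base]

lemma IsPath.length_eq {xs : List α} {ys : List β} {l : List (α × β)} (h : IsPath xs ys l) :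
    l.length + 1 = xs.length + ys.length := by
  induction h with
  | nil x y => simp
  | horiz x y xs ys l h ih => simp at ih ⊢; omega
  | vert x y xs ys l h ih => simp at ih ⊢; omega

lemma IsPath.mem {xs : List α} {ys : List β} {l : List (α × β)} (h : IsPath xs ys l) :
    ∀ p ∈ l, p.1 ∈ xs ∧ p.2 ∈ ys := by
  induction h with
  | nil x y => simp
  | horiz x y xs ys l h ih =>
    intro p hp
    rcases List.mem_cons.1 hp with rfl | hp
    · simp
    · exact ⟨List.mem_cons_of_mem _ (ih p hp).1, (ih p hp).2⟩
  | vert x y xs ys l h ih =>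
    intro p hp
    rcases List.mem_cons.1 hp with rfl | hp
    · simp
    · exact ⟨(ih p hp).1, List.mem_cons_of_mem _ (ih p hp).2⟩

lemma IsPath.sorted [PartialOrder α] [PartialOrder β] {xs : List α} {ys : List β} {l : List (α × β)}
    (h : IsPath xs ys l) (hx : xs.Pairwise (· ≤ ·)) (hy : ys.Pairwise (· ≤ ·)) :
    (l.map Prod.fst).Pairwise (· ≤ ·) ∧ (l.map Prod.snd).Pairwise (· ≤ ·) := by
  induction h with
  | nil x y => simp
  | horiz x y xs ys l h ih =>
    rw [List.pairwise_cons] at hx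
    obtain ⟨h1, h2⟩ := ih hx.2 hy
    rw [List.pairwise_cons] at hy
    simp only [List.map_cons, List.pairwise_cons, h1, h2, and_true]
    refine ⟨?_, ?_⟩
    · intro a ha
      obtain ⟨p, hp, rfl⟩ := List.mem_map.1 ha
      exact hx.1 _ (h.mem p hp).1
    · intro a ha
      obtain ⟨p, hp, rfl⟩ := List.mem_map.1 ha
      rcases List.mem_cons.1 (h.mem p hp).2 with e | e
      · exact e.symm.le
      · exact hy.1 _ e
  | vert x y xs ys l h ih =>
    rw [List.pairwise_cons] at hy
    obtain ⟨h1, h2⟩ := ih hx hy.2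
    rw [List.pairwise_cons] at hx
    simp only [List.map_cons, List.pairwise_cons, h1, h2, and_true]
    refine ⟨?_, ?_⟩
    · intro a ha
      obtain ⟨p, hp, rfl⟩ := List.mem_map.1 ha
      rcases List.mem_cons.1 (h.mem p hp).1 with e | e
      · exact e.symm.le
      · exact hx.1 _ e
    · intro a ha
      obtain ⟨p, hp, rfl⟩ := List.mem_map.1 ha
      exact hy.1 _ (h.mem p hp).2

lemma IsPath.head {xs : List α} {ys : List β} {l : List (α × β)} (h : IsPath xs ys l) :
    ∃ x xs' y ys' l', xs = x :: xs' ∧ ys = y :: ys' ∧ l = (x, y) :: l' := by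
  cases h with
  | nil x y => exact ⟨_, _, _, _, _, rfl, rfl, rfl⟩
  | horiz x y xs ys l h => exact ⟨_, _, _, _, _, rfl, rfl, rfl⟩
  | vert x y xs ys l h => exact ⟨_, _, _, _, _, rfl, rfl, rfl⟩

lemma IsPath.step_left {xs : List α} {ys : List β} {l : List (α × β)} (h : IsPath xs ys l) :
    ∀ (xs₁ : List α) (u v : α) (xs₂ : List α), xs = xs₁ ++ u :: v :: xs₂ →
      ∃ l₁ y l₂, l = l₁ ++ (u, y) :: (v, y) :: l₂ := by
  induction h with
  | nil x y =>
    intro xs₁ u v xs₂ h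
    have := congrArg List.length h
    simp at this
    omega
  | horiz x y xs ys l h ih =>
    intro xs₁ u v xs₂ e
    rcases xs₁ with _ | ⟨x₁, xs₁⟩
    · simp only [List.nil_append, List.cons.injEq] at e
      obtain ⟨rfl, rfl⟩ := e
      obtain ⟨x', xs', y', ys', l', e1, e2, e3⟩ := h.head
      simp only [List.cons.injEq] at e1 e2
      obtain ⟨rfl, rfl⟩ := e1
      obtain ⟨rfl, rfl⟩ := e2
      exact ⟨[], y, l', by rw [e3]; rfl⟩
    · simp only [List.cons_append, List.cons.injEq] at e
      obtain ⟨l₁, y', l₂, e'⟩ := ih xs₁ u v xs₂ e.2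
      exact ⟨(x, y) :: l₁, y', l₂, by rw [e']; rfl⟩
  | vert x y xs ys l h ih =>
    intro xs₁ u v xs₂ e
    obtain ⟨l₁, y', l₂, e'⟩ := ih xs₁ u v xs₂ e
    exact ⟨(x, y) :: l₁, y', l₂, by rw [e']; rfl⟩

lemma IsPath.step_right {xs : List α} {ys : List β} {l : List (α × β)} (h : IsPath xs ys l) :
    ∀ (ys₁ : List β) (u v : β) (ys₂ : List β), ys = ys₁ ++ u :: v :: ys₂ →
      ∃ l₁ x l₂, l = l₁ ++ (x, u) :: (x, v) :: l₂ := by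
  induction h with
  | nil x y =>
    intro xs₁ u v xs₂ h
    have := congrArg List.length h
    simp at this
    omega
  | vert x y xs ys l h ih =>
    intro ys₁ u v ys₂ e
    rcases ys₁ with _ | ⟨y₁, ys₁⟩
    · simp only [List.nil_append, List.cons.injEq] at e
      obtain ⟨rfl, rfl⟩ := e
      obtain ⟨x', xs', y', ys', l', e1, e2, e3⟩ := h.head
      simp only [List.cons.injEq] at e1 e2
      obtain ⟨rfl, rfl⟩ := e1
      obtain ⟨rfl, rfl⟩ := e2
      exact ⟨[], x, l', by rw [e3]; rfl⟩
    · simp only [List.cons_append, List.cons.injEq] at e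
      obtain ⟨l₁, y', l₂, e'⟩ := ih ys₁ u v ys₂ e.2
      exact ⟨(x, y) :: l₁, y', l₂, by rw [e']; rfl⟩
  | horiz x y xs ys l h ih =>
    intro ys₁ u v ys₂ e
    obtain ⟨l₁, y', l₂, e'⟩ := ih ys₁ u v ys₂ e
    exact ⟨(x, y) :: l₁, y', l₂, by rw [e']; rfl⟩

end Lists

section Th

/-- the simplicial operator with a given list of values -/
noncomputable def th {p : ℕ} (i : ℕ) (l : List (Fin (p + 1))) :
    SimplexCategory.mk i ⟶ SimplexCategory.mk p :=
  open scoped Classical in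
  if h : Monotone (fun j : Fin (i + 1) => l.getD j 0) then SimplexCategory.mkHom ⟨_, h⟩
  else SimplexCategory.mkHom ⟨fun _ => 0, fun _ _ _ => le_rfl⟩

lemma th_apply {p i : ℕ} (l : List (Fin (p + 1))) (hl : l.length = i + 1)
    (hs : l.Pairwise (· ≤ ·)) (j : Fin (i + 1)) :
    (th i l).toOrderHom j = l[(j : ℕ)]'(by omega) := by
  have h : Monotone (fun j : Fin (i + 1) => l.getD j 0) := by
    intro a b hab
    have ha : (a : ℕ) < l.length := by omega
    have hb : (b : ℕ) < l.length := by omega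
    simp only [List.getD_eq_getElem _ _ ha, List.getD_eq_getElem _ _ hb]
    rcases hab.eq_or_lt with rfl | hab
    · exact le_rfl
    · exact List.pairwise_iff_getElem.1 hs a b ha hb hab
  unfold th
  rw [dif_pos h]
  exact List.getD_eq_getElem _ _ _

lemma th_map {m p i : ℕ} (l : List (Fin (m + 1))) (hl : l.length = i + 1)
    (hs : l.Pairwise (· ≤ ·)) (φ : SimplexCategory.mk m ⟶ SimplexCategory.mk p) :
    th i (l.map φ.toOrderHom) = th i l ≫ φ := by
  have hs' : (l.map φ.toOrderHom).Pairwise (· ≤ ·) :=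
    List.pairwise_map.2 (hs.imp (fun h => φ.toOrderHom.monotone h))
  ext j : 3
  refine (th_apply (p := p) (i := i) (l.map φ.toOrderHom) (by simpa using hl) hs' j).trans ?_
  show _ = φ.toOrderHom ((th i l).toOrderHom j)
  rw [th_apply l hl hs]
  simp

lemma th_comp {p i i' : ℕ} (l : List (Fin (p + 1))) (hl : l.length = i + 1)
    (hs : l.Pairwise (· ≤ ·)) (ψ : SimplexCategory.mk i' ⟶ SimplexCategory.mk i)
    (l' : List (Fin (p + 1))) (hl' : l'.length = i' + 1)
    (h : ∀ (j : Fin (i' + 1)), l'[(j : ℕ)]? = l[(ψ.toOrderHom j : ℕ)]?) :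
    ψ ≫ th i l = th i' l' := by
  have hg : ∀ (j : Fin (i' + 1)), l'[(j : ℕ)]'(by omega) =
      l[(ψ.toOrderHom j : ℕ)]'(by have := (ψ.toOrderHom j).isLt; simp at this; omega) := by
    intro j
    have := h j
    have h2 := (ψ.toOrderHom j).isLt
    simp only [SimplexCategory.len_mk] at h2
    rw [List.getElem?_eq_getElem (by omega), List.getElem?_eq_getElem (by omega)] at this
    exact Option.some.inj this
  have hs' : l'.Pairwise (· ≤ ·) := by
    rw [List.pairwise_iff_getElem]
    intro a b ha hb hab
    have e1 := hg ⟨a, by omega⟩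
    have e2 := hg ⟨b, by omega⟩
    simp only at e1 e2
    rw [e1, e2]
    have hm : ψ.toOrderHom ⟨a, by simp; omega⟩ ≤ ψ.toOrderHom ⟨b, by simp; omega⟩ :=
      ψ.toOrderHom.monotone (by simp [Fin.le_def]; omega)
    rcases hm.eq_or_lt with e | hlt
    · simp only [e, le_rfl]
    · exact List.pairwise_iff_getElem.1 hs _ _ _ _ hlt
  ext j : 3
  refine Eq.trans ?_ (th_apply (p := p) (i := i') l' hl' hs' j).symm
  show (th i l).toOrderHom (ψ.toOrderHom j) = _
  rw [th_apply l hl hs, hg]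

lemma th_finRange (p : ℕ) : th p (List.finRange (p + 1)) = 𝟙 _ := by
  ext j : 3
  refine (th_apply (p := p) (i := p) (List.finRange (p + 1)) (by simp) ?_ j).trans ?_
  · rw [List.pairwise_iff_getElem]
    intro a b ha hb hab
    simp [Fin.le_def]; omega
  · simp

end Th

section KK

universe u v
variable {k : Type} [CommRing k] {X : SSet.{u}} {T : SSet.{v}}

lemma eraseIdx_map' {α β : Type*} (f : α → β) (l : List α) (r : ℕ) :
    (l.eraseIdx r).map f = (l.map f).eraseIdx r := by
  induction l generalizing r with
  | nil => simp
  | cons a l ih => cases r <;> simp [ih]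

lemma finRange_sorted (n : ℕ) : (List.finRange n).Pairwise (· ≤ ·) := by
  rw [List.pairwise_iff_getElem]
  intro a b ha hb hab
  simp [Fin.le_def]; omega

/-- evaluation of a cochain on the simplex spanned by a list of vertices -/
noncomputable def FF {i m n : ℕ}
    (w : X.obj (Opposite.op (SimplexCategory.mk i)) → T.obj (Opposite.op (SimplexCategory.mk i)) → k)
    (x : X.obj (Opposite.op (SimplexCategory.mk m))) (t : T.obj (Opposite.op (SimplexCategory.mk n)))
    (l : List (Fin (m + 1) × Fin (n + 1))) : k :=
  w (X.map (th i (l.map Prod.fst)).op x) (T.map (th i (l.map Prod.snd)).op t)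

/-- evaluation of a cochain on the shuffle product -/
noncomputable def K {i : ℕ} (m n : ℕ)
    (w : X.obj (Opposite.op (SimplexCategory.mk i)) → T.obj (Opposite.op (SimplexCategory.mk i)) → k)
    (x : X.obj (Opposite.op (SimplexCategory.mk m)))
    (t : T.obj (Opposite.op (SimplexCategory.mk n))) : k :=
  P (List.finRange (m + 1)) (List.finRange (n + 1)) (FF w x t)

variable {i : ℕ}
  (w : X.obj (Opposite.op (SimplexCategory.mk i)) → T.obj (Opposite.op (SimplexCategory.mk i)) → k)

lemma path_good {m n : ℕ} {l : List (Fin (m + 1) × Fin (n + 1))}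
    (h : IsPath (List.finRange (m + 1)) (List.finRange (n + 1)) l) :
    (l.map Prod.fst).Pairwise (· ≤ ·) ∧ (l.map Prod.snd).Pairwise (· ≤ ·) ∧ l.length = m + n + 1 := by
  obtain ⟨h1, h2⟩ := h.sorted (finRange_sorted _) (finRange_sorted _)
  have := h.length_eq
  simp at this
  exact ⟨h1, h2, by omega⟩

lemma K_map {m n m' n' : ℕ} (hi : m' + n' = i)
    (x : X.obj (Opposite.op (SimplexCategory.mk m))) (t : T.obj (Opposite.op (SimplexCategory.mk n)))
    (φ : SimplexCategory.mk m' ⟶ SimplexCategory.mk m)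
    (ψ : SimplexCategory.mk n' ⟶ SimplexCategory.mk n) :
    P ((List.finRange (m' + 1)).map (fun j => (φ.toOrderHom j : Fin (m + 1))))
      ((List.finRange (n' + 1)).map (fun j => (ψ.toOrderHom j : Fin (n + 1)))) (FF w x t) =
      K m' n' w (X.map φ.op x) (T.map ψ.op t) := by
  rw [P_map _ _ _ _ _ rfl, K]
  apply P_congr'
  intro l hl
  obtain ⟨h1, h2, h3⟩ := path_good hl
  unfold FF
  have e1 : (List.map (Prod.map (fun j => (φ.toOrderHom j : Fin (m + 1)))
      (fun j => (ψ.toOrderHom j : Fin (n + 1)))) l).map Prod.fst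
      = (l.map Prod.fst).map φ.toOrderHom := by simp
  have e2 : (List.map (Prod.map (fun j => (φ.toOrderHom j : Fin (m + 1)))
      (fun j => (ψ.toOrderHom j : Fin (n + 1)))) l).map Prod.snd
      = (l.map Prod.snd).map ψ.toOrderHom := by simp
  rw [e1, e2, th_map _ (by simp; omega) h1, th_map _ (by simp; omega) h2]
  simp only [op_comp, X.map_comp_apply, T.map_comp_apply]

lemma K_map_left {m n m' : ℕ} (hi : m' + n = i)
    (x : X.obj (Opposite.op (SimplexCategory.mk m))) (t : T.obj (Opposite.op (SimplexCategory.mk n)))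
    (φ : SimplexCategory.mk m' ⟶ SimplexCategory.mk m) :
    P ((List.finRange (m' + 1)).map (fun j => (φ.toOrderHom j : Fin (m + 1))))
      (List.finRange (n + 1)) (FF w x t) = K m' n w (X.map φ.op x) t := by
  have := K_map w hi x t φ (𝟙 _)
  rw [op_id, T.map_id_apply] at this
  rw [← this]
  congr 1
  exact (List.map_id _).symm

lemma K_map_right {m n n' : ℕ} (hi : m + n' = i)
    (x : X.obj (Opposite.op (SimplexCategory.mk m))) (t : T.obj (Opposite.op (SimplexCategory.mk n)))
    (ψ : SimplexCategory.mk n' ⟶ SimplexCategory.mk n) :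
    P (List.finRange (m + 1))
      ((List.finRange (n' + 1)).map (fun j => (ψ.toOrderHom j : Fin (n + 1)))) (FF w x t) =
      K m n' w x (T.map ψ.op t) := by
  have := K_map w hi x t (𝟙 _) ψ
  rw [op_id, X.map_id_apply] at this
  rw [← this]
  congr 1
  exact (List.map_id _).symm

lemma finRange_erase (m : ℕ) (r : Fin (m + 2)) :
    (List.finRange (m + 2)).eraseIdx r =
      (List.finRange (m + 1)).map (fun j => ((SimplexCategory.δ r).toOrderHom j : Fin (m + 2))) := by
  apply List.ext_getElem
  · rw [List.length_eraseIdx_of_lt (by simp)]; simp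
  · intro a h1 h2
    simp only [List.length_map, List.length_finRange] at h2
    rw [List.getElem_eraseIdx]
    simp only [List.getElem_map, List.getElem_finRange]
    have : ∀ j : Fin (m + 1), (SimplexCategory.δ r).toOrderHom j = r.succAbove j := fun _ => rfl
    rw [this]
    ext
    simp only [Fin.succAbove, Fin.lt_def]
    split_ifs <;> simp_all

lemma finRange_take (m a : ℕ) (h : a ≤ m) :
    (List.finRange (m + 1)).take (a + 1) =
      (List.finRange (a + 1)).map (fun j => ((frontHom a m h).toOrderHom j : Fin (m + 1))) := by
  apply List.ext_getElem
  · simp; omega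
  · intro b h1 h2
    simp only [List.length_map, List.length_finRange] at h2
    simp only [List.getElem_map, List.getElem_finRange, List.getElem_take]
    rfl

lemma finRange_drop (m a : ℕ) (h : a ≤ m) :
    (List.finRange (m + 1)).drop a =
      (List.finRange (m - a + 1)).map
        (fun j => ((backHom (m - a) m (by omega)).toOrderHom j : Fin (m + 1))) := by
  apply List.ext_getElem
  · simp; omega
  · intro b h1 h2
    simp only [List.length_map, List.length_finRange] at h2
    simp only [List.getElem_map, List.getElem_finRange, List.getElem_drop]
    have : ∀ j : Fin (m - a + 1), (backHom (m - a) m (by omega)).toOrderHom j =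
      (⟨m - (m - a) + (j : ℕ), by omega⟩ : Fin (m + 1)) := fun _ => rfl
    rw [this]
    ext
    simp; omega

lemma D_left_zero (n : ℕ) (F : List (Fin 1 × Fin (n + 1)) → k) :
    D (fun l => P l (List.finRange (n + 1)) F) (List.finRange (0 + 1)) = 0 := by
  have : List.finRange (0 + 1) = [0] := by decide
  rw [this]
  simp [D]

lemma D_right_zero (m : ℕ) (F : List (Fin (m + 1) × Fin 1) → k) :
    D (fun l => P (List.finRange (m + 1)) l F) (List.finRange (0 + 1)) = 0 := by
  have : List.finRange (0 + 1) = [0] := by decide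
  rw [this]
  simp [D]

lemma D_left_succ (m n : ℕ) (hi : m + n = i)
    (x : X.obj (Opposite.op (SimplexCategory.mk (m + 1))))
    (t : T.obj (Opposite.op (SimplexCategory.mk n))) :
    D (fun l => P l (List.finRange (n + 1)) (FF w x t)) (List.finRange (m + 1 + 1)) =
      ∑ r : Fin (m + 2), (-1) ^ (r : ℕ) * K m n w (X.map (SimplexCategory.δ r).op x) t := by
  rw [D, List.length_finRange, Finset.sum_range]
  apply Finset.sum_congr rfl
  intro r _
  rw [finRange_erase, K_map_left w hi]

lemma D_right_succ (m n : ℕ) (hi : m + n = i)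
    (x : X.obj (Opposite.op (SimplexCategory.mk m)))
    (t : T.obj (Opposite.op (SimplexCategory.mk (n + 1)))) :
    D (fun l => P (List.finRange (m + 1)) l (FF w x t)) (List.finRange (n + 1 + 1)) =
      ∑ r : Fin (n + 2), (-1) ^ (r : ℕ) * K m n w x (T.map (SimplexCategory.δ r).op t) := by
  rw [D, List.length_finRange, Finset.sum_range]
  apply Finset.sum_congr rfl
  intro r _
  rw [finRange_erase, K_map_right w hi]

theorem K_D (m n : ℕ) (hi : m + n = i + 1)
    (w' : X.obj (Opposite.op (SimplexCategory.mk (i + 1))) →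
      T.obj (Opposite.op (SimplexCategory.mk (i + 1))) → k)
    (hw : ∀ x t, w' x t = ∑ r : Fin (i + 2), (-1) ^ (r : ℕ) *
      w (X.map (SimplexCategory.δ r).op x) (T.map (SimplexCategory.δ r).op t))
    (x : X.obj (Opposite.op (SimplexCategory.mk m)))
    (t : T.obj (Opposite.op (SimplexCategory.mk n))) :
    K m n w' x t = D (fun l => P l (List.finRange (n + 1)) (FF w x t)) (List.finRange (m + 1))
      + (-1) ^ m * D (fun l => P (List.finRange (m + 1)) l (FF w x t)) (List.finRange (n + 1)) := by
  have h : K m n w' x t =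
      P (List.finRange (m + 1)) (List.finRange (n + 1)) (D (FF w x t)) := by
    unfold K
    apply P_congr'
    intro l hl
    obtain ⟨h1, h2, h3⟩ := path_good hl
    have hl2 : l.length = i + 2 := by omega
    rw [D, hl2, Finset.sum_range]
    unfold FF
    rw [hw]
    apply Finset.sum_congr rfl
    intro r _
    have key : ∀ {p : ℕ} (l' : List (Fin (p + 1))), l'.length = i + 2 → l'.Pairwise (· ≤ ·) →
        SimplexCategory.δ r ≫ th (i + 1) l' = th i (l'.eraseIdx r) := by
      intro p l' hl' hs'
      apply th_comp _ hl' hs'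
      · rw [List.length_eraseIdx_of_lt (by omega), hl']; rfl
      · intro j
        have : (SimplexCategory.δ r).toOrderHom j = r.succAbove j := rfl
        rw [this, List.getElem?_eraseIdx]
        simp only [Fin.succAbove, Fin.lt_def, Fin.val_castSucc]
        split_ifs <;> rfl
    rw [← X.map_comp_apply, ← T.map_comp_apply, ← op_comp, ← op_comp, key _ (by simpa) h1,
      key _ (by simpa) h2]
    simp only [← eraseIdx_map']
  rw [h, P_D _ _ _ rfl]
  have : eps (List.finRange (m + 1)) (List.finRange (n + 1)) (FF w x t []) = 0 := by
    unfold eps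
    rw [if_neg]
    simp; omega
  rw [this]
  simp only [List.length_finRange, pow_succ]
  ring

theorem K_cut {j : ℕ} (m n : ℕ) (hij : m + n = i + j)
    (w' : X.obj (Opposite.op (SimplexCategory.mk j)) → T.obj (Opposite.op (SimplexCategory.mk j)) → k)
    (w'' : X.obj (Opposite.op (SimplexCategory.mk (i + j))) →
      T.obj (Opposite.op (SimplexCategory.mk (i + j))) → k)
    (hw : ∀ x t, w'' x t =
      w (X.map (frontHom i (i + j) (by omega)).op x) (T.map (frontHom i (i + j) (by omega)).op t) *
      w' (X.map (backHom j (i + j) (by omega)).op x) (T.map (backHom j (i + j) (by omega)).op t))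
    (x : X.obj (Opposite.op (SimplexCategory.mk m)))
    (t : T.obj (Opposite.op (SimplexCategory.mk n))) :
    K m n w'' x t = ∑ ab ∈ Finset.HasAntidiagonal.antidiagonal i,
      if h : ab.1 ≤ m ∧ ab.2 ≤ n then
        (-1) ^ (ab.2 * (m - ab.1)) *
          (K ab.1 ab.2 w (X.map (frontHom ab.1 m h.1).op x) (T.map (frontHom ab.2 n h.2).op t) *
           K (m - ab.1) (n - ab.2) w' (X.map (backHom (m - ab.1) m (by omega)).op x)
            (T.map (backHom (n - ab.2) n (by omega)).op t)) else 0 := by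
  have h : K m n w'' x t =
      P (List.finRange (m + 1)) (List.finRange (n + 1)) (fun l => FF w x t (l.take (i + 1)) *
        (fun l => if l.length = 0 then 0 else FF w' x t l) (l.drop i)) := by
    unfold K
    apply P_congr'
    intro l hl
    obtain ⟨h1, h2, h3⟩ := path_good hl
    dsimp only
    rw [if_neg (by simp; omega)]
    unfold FF
    rw [hw]
    have key1 : ∀ {p : ℕ} (l' : List (Fin (p + 1))), l'.length = i + j + 1 → l'.Pairwise (· ≤ ·) →
        frontHom i (i + j) (by omega) ≫ th (i + j) l' = th i (l'.take (i + 1)) := by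
      intro p l' hl' hs'
      apply th_comp _ hl' hs'
      · simp; omega
      · intro b
        have : (frontHom i (i + j) (by omega)).toOrderHom b
          = (Fin.castLE (by omega) b : Fin (i + j + 1)) := rfl
        rw [this, List.getElem?_take_of_lt (by omega)]
        rfl
    have key2 : ∀ {p : ℕ} (l' : List (Fin (p + 1))), l'.length = i + j + 1 → l'.Pairwise (· ≤ ·) →
        backHom j (i + j) (by omega) ≫ th (i + j) l' = th j (l'.drop i) := by
      intro p l' hl' hs'
      apply th_comp _ hl' hs'
      · simp; omega
      · intro b
        have : (backHom j (i + j) (by omega)).toOrderHom b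
          = (⟨i + j - j + b, by omega⟩ : Fin (i + j + 1)) := rfl
        rw [this, List.getElem?_drop]
        simp
    simp only [← X.map_comp_apply, ← T.map_comp_apply, ← op_comp]
    rw [key1 _ (by simp; omega) h1, key1 _ (by simp; omega) h2,
      key2 _ (by simp; omega) h1, key2 _ (by simp; omega) h2]
    simp only [List.map_take, List.map_drop]
  refine h.trans ((P_cut i (List.finRange (m + 1)) (List.finRange (n + 1)) (FF w x t)
    (fun l => if l.length = 0 then 0 else FF w' x t l) (by simp)).trans ?_)
  apply Finset.sum_congr rfl
  rintro ⟨a, b⟩ hab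
  simp only [Finset.HasAntidiagonal.mem_antidiagonal] at hab
  dsimp only
  split_ifs with hc
  · rw [finRange_take _ _ hc.1, finRange_take _ _ hc.2, finRange_drop _ _ hc.1,
      finRange_drop _ _ hc.2, K_map w hab]
    rw [P_congr' (G := FF w' x t), K_map w' (by omega)]
    · simp
    · intro l hl
      obtain ⟨_, _, _, _, _, _, _, rfl⟩ := hl.head
      simp
  · rw [not_and_or] at hc
    rcases hc with hc | hc
    · rw [List.drop_eq_nil_of_le (as := List.finRange (m + 1)) (by simp; omega)]
      simp
    · rw [List.drop_eq_nil_of_le (as := List.finRange (n + 1)) (by simp; omega)]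
      simp

lemma finRange_split (m : ℕ) (r : Fin (m + 1)) :
    List.finRange (m + 2) = (List.finRange (m + 2)).take r ++ r.castSucc :: r.succ ::
      (List.finRange (m + 2)).drop (r + 2) := by
  conv_lhs => rw [← List.take_append_drop r (List.finRange (m + 2))]
  congr 1
  rw [List.drop_eq_getElem_cons (by simp; omega), List.drop_eq_getElem_cons (by simp; omega)]
  simp
  constructor <;> rfl

lemma degen_factor {p : ℕ} (N : ℕ) (θ : SimplexCategory.mk (N + 1) ⟶ SimplexCategory.mk p) (c : Fin (N + 1))
    (h : θ.toOrderHom c.castSucc = θ.toOrderHom c.succ) (Z : SSet.{u})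
    (z : Z.obj (Opposite.op (SimplexCategory.mk p))) :
    ∃ z', Z.map θ.op z = Z.map (SimplexCategory.σ c).op z' := by
  obtain ⟨θ', e⟩ := SimplexCategory.eq_σ_comp_of_not_injective' θ c h
  refine ⟨Z.map θ'.op z, ?_⟩
  rw [e, op_comp, Z.map_comp_apply]

theorem K_deg_left {N : ℕ} (m n : ℕ) (hN : m + n = N)
    (w : X.obj (Opposite.op (SimplexCategory.mk (N + 1))) →
      T.obj (Opposite.op (SimplexCategory.mk (N + 1))) → k)
    (hw : ∀ (c : Fin (N + 1)) x t,
      w (X.map (SimplexCategory.σ c).op x) (T.map (SimplexCategory.σ c).op t) = 0)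
    (r : Fin (m + 1)) (x : X.obj (Opposite.op (SimplexCategory.mk m)))
    (t : T.obj (Opposite.op (SimplexCategory.mk n))) :
    K (m + 1) n w (X.map (SimplexCategory.σ r).op x) t = 0 := by
  unfold K
  rw [← P_zero (k := k) (List.finRange (m + 1 + 1)) (List.finRange (n + 1))]
  apply P_congr'
  intro l hl
  obtain ⟨h1, h2, h3⟩ := path_good hl
  obtain ⟨l₁, y, l₂, e⟩ := hl.step_left _ _ _ _ (finRange_split m r)
  unfold FF
  rw [← X.map_comp_apply, ← op_comp]
  have hc : l₁.length < N + 1 := by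
    have := congrArg List.length e
    simp at this; omega
  have L1 : (l.map Prod.fst).length = N + 1 + 1 := by simp; omega
  have L2 : (l.map Prod.snd).length = N + 1 + 1 := by simp; omega
  obtain ⟨x', ex⟩ := degen_factor N (th (N + 1) (l.map Prod.fst) ≫ SimplexCategory.σ r) ⟨l₁.length, hc⟩
    (by
      show (SimplexCategory.σ r).toOrderHom ((th (N + 1) (l.map Prod.fst)).toOrderHom _) =
        (SimplexCategory.σ r).toOrderHom ((th (N + 1) (l.map Prod.fst)).toOrderHom _)
      rw [th_apply _ L1 h1, th_apply _ L1 h1]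
      have e1 : (l.map Prod.fst)[l₁.length]'(by omega) = r.castSucc := by
        simp [e]
      have e2 : (l.map Prod.fst)[l₁.length + 1]'(by omega) = r.succ := by
        simp [e]
      refine Eq.trans (congrArg _ e1) (Eq.trans ?_ (congrArg _ e2).symm)
      show r.predAbove r.castSucc = r.predAbove r.succ
      simp) X x
  obtain ⟨t', et⟩ := degen_factor N (th (N + 1) (l.map Prod.snd)) ⟨l₁.length, hc⟩
    (by
      rw [th_apply _ L2 h2, th_apply _ L2 h2]
      have e1 : (l.map Prod.snd)[l₁.length]'(by omega) = y := by
        simp [e]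
      have e2 : (l.map Prod.snd)[l₁.length + 1]'(by omega) = y := by
        simp [e]
      exact e1.trans e2.symm) T t
  rw [ex, et, hw]

theorem K_deg_right {N : ℕ} (m n : ℕ) (hN : m + n = N)
    (w : X.obj (Opposite.op (SimplexCategory.mk (N + 1))) →
      T.obj (Opposite.op (SimplexCategory.mk (N + 1))) → k)
    (hw : ∀ (c : Fin (N + 1)) x t,
      w (X.map (SimplexCategory.σ c).op x) (T.map (SimplexCategory.σ c).op t) = 0)
    (r : Fin (n + 1)) (x : X.obj (Opposite.op (SimplexCategory.mk m)))
    (t : T.obj (Opposite.op (SimplexCategory.mk n))) :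
    K m (n + 1) w x (T.map (SimplexCategory.σ r).op t) = 0 := by
  unfold K
  rw [← P_zero (k := k) (List.finRange (m + 1)) (List.finRange (n + 1 + 1))]
  apply P_congr'
  intro l hl
  obtain ⟨h1, h2, h3⟩ := path_good hl
  obtain ⟨l₁, y, l₂, e⟩ := hl.step_right _ _ _ _ (finRange_split n r)
  unfold FF
  rw [← T.map_comp_apply, ← op_comp]
  have hc : l₁.length < N + 1 := by
    have := congrArg List.length e
    simp at this; omega
  have L1 : (l.map Prod.fst).length = N + 1 + 1 := by simp; omega
  have L2 : (l.map Prod.snd).length = N + 1 + 1 := by simp; omega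
  obtain ⟨t', et⟩ := degen_factor N (th (N + 1) (l.map Prod.snd) ≫ SimplexCategory.σ r) ⟨l₁.length, hc⟩
    (by
      show (SimplexCategory.σ r).toOrderHom ((th (N + 1) (l.map Prod.snd)).toOrderHom _) =
        (SimplexCategory.σ r).toOrderHom ((th (N + 1) (l.map Prod.snd)).toOrderHom _)
      rw [th_apply _ L2 h2, th_apply _ L2 h2]
      have e1 : (l.map Prod.snd)[l₁.length]'(by omega) = r.castSucc := by
        simp [e]
      have e2 : (l.map Prod.snd)[l₁.length + 1]'(by omega) = r.succ := by
        simp [e]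
      refine Eq.trans (congrArg _ e1) (Eq.trans ?_ (congrArg _ e2).symm)
      show r.predAbove r.castSucc = r.predAbove r.succ
      simp) T t
  obtain ⟨x', ex⟩ := degen_factor N (th (N + 1) (l.map Prod.fst)) ⟨l₁.length, hc⟩
    (by
      rw [th_apply _ L1 h1, th_apply _ L1 h1]
      have e1 : (l.map Prod.fst)[l₁.length]'(by omega) = y := by
        simp [e]
      have e2 : (l.map Prod.fst)[l₁.length + 1]'(by omega) = y := by
        simp [e]
      exact e1.trans e2.symm) X x
  rw [ex, et, hw]

lemma K_zero_right (m : ℕ)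
    (w : X.obj (Opposite.op (SimplexCategory.mk m)) → T.obj (Opposite.op (SimplexCategory.mk m)) → k)
    (x : X.obj (Opposite.op (SimplexCategory.mk m)))
    (t : T.obj (Opposite.op (SimplexCategory.mk 0))) :
    ∃ θ : SimplexCategory.mk m ⟶ SimplexCategory.mk 0, K m 0 w x t = w x (T.map θ.op t) := by
  refine ⟨th m ((List.finRange (m + 1)).map (fun _ => 0)), ?_⟩
  have : List.finRange (0 + 1) = [0] := by decide
  rw [K, this, P_single _ _ (by simp)]
  simp only [FF, List.map_map]
  have e : (Prod.fst ∘ fun x : Fin (m + 1) => (x, (0 : Fin (0 + 1)))) = id := rfl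
  rw [e, List.map_id, th_finRange, op_id, X.map_id_apply]
  rfl

end KK

section Pres

universe u v
variable {k : Type} [CommRing k] {X : SSet.{u}} {CX : DGA k}
  {E : CX.A → ∀ n : ℕ, X.obj (Opposite.op (SimplexCategory.mk n)) → k}

lemma sgn_nat (n : ℕ) (y : k) : (((-1 : ℤˣ) ^ n : ℤˣ) : ℤ) • y = (-1) ^ n * y := by
  rw [zsmul_eq_mul]; push_cast; rfl

lemma sgn_eq (z : ℤ) (n : ℕ) (h : Even (z - n)) : (-1 : ℤˣ) ^ z = (-1 : ℤˣ) ^ n := by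
  obtain ⟨r, hr⟩ := h
  have : z = n + (r + r) := by omega
  rw [this, zpow_add, zpow_add, zpow_natCast, Int.units_mul_self, mul_one]

/-- The component maps of a presentation as linear maps. -/
def Elin (hE : IsCochainPresentation X CX E) (n : ℕ)
    (σ : X.obj (Opposite.op (SimplexCategory.mk n))) : CX.A →ₗ[k] k where
  toFun a := E a n σ
  map_add' a b := hE.1 a b n σ
  map_smul' c a := hE.2.1 c a n σ

lemma E_eq (hE : IsCochainPresentation X CX E) (a : CX.A) (n : ℕ)
    (σ : X.obj (Opposite.op (SimplexCategory.mk n))) : E a n σ = Elin hE n σ a := rfl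

lemma E_deg (hE : IsCochainPresentation X CX E) (a : CX.A) (n : ℕ) (i : Fin (n + 1))
    (τ : X.obj (Opposite.op (SimplexCategory.mk n))) :
    E a (n + 1) (X.map (SimplexCategory.σ i).op τ) = 0 := hE.2.2.1 a n i τ

lemma gr_neg (hE : IsCochainPresentation X CX E) {i : ℤ} (hi : i < 0) {a : CX.A}
    (ha : a ∈ CX.gr i) : a = 0 := by
  rw [hE.2.2.2.1 i hi] at ha
  simpa using ha

lemma E_ne (hE : IsCochainPresentation X CX E) {m : ℤ} {a : CX.A} (ha : a ∈ CX.gr m) (n : ℕ)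
    (σ : X.obj (Opposite.op (SimplexCategory.mk n))) (h : (n : ℤ) ≠ m) : E a n σ = 0 :=
  hE.2.2.2.2.1 m a ha n σ h

lemma E_one_zero (hE : IsCochainPresentation X CX E)
    (σ : X.obj (Opposite.op (SimplexCategory.mk 0))) : E 1 0 σ = 1 :=
  hE.2.2.2.2.2.2.2.2.1 σ

lemma E_one_succ (hE : IsCochainPresentation X CX E) (n : ℕ)
    (σ : X.obj (Opposite.op (SimplexCategory.mk (n + 1)))) : E 1 (n + 1) σ = 0 :=
  hE.2.2.2.2.2.2.2.2.2.1 n σ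

lemma E_mul (hE : IsCochainPresentation X CX E) (p q : ℕ) {a b : CX.A} (ha : a ∈ CX.gr (p : ℤ))
    (hb : b ∈ CX.gr (q : ℤ)) (σ : X.obj (Opposite.op (SimplexCategory.mk (p + q)))) :
    E (a * b) (p + q) σ =
      E a p (X.map (frontHom p (p + q) (by omega)).op σ) *
        E b q (X.map (backHom q (p + q) (by omega)).op σ) :=
  hE.2.2.2.2.2.2.2.2.2.2.1 p q a ha b hb σ

/-- induction over homogeneous elements -/
lemma hom_induction (CX : DGA k) {p : CX.A → Prop} (h0 : p 0)
    (h : ∀ (i : ℤ) (a : CX.A), a ∈ CX.gr i → p a) (hadd : ∀ a b, p a → p b → p (a + b))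
    (a : CX.A) : p a :=
  DirectSum.Decomposition.inductionOn CX.gr h0 (fun {i} m => h i m m.2) hadd a

lemma E_decompose (hE : IsCochainPresentation X CX E) (n : ℕ)
    (σ : X.obj (Opposite.op (SimplexCategory.mk n))) (a : CX.A) :
    E ((DirectSum.decompose CX.gr a (n : ℤ) : CX.gr (n : ℤ)) : CX.A) n σ = E a n σ := by
  simp only [E_eq hE]
  induction a using hom_induction CX with
  | h0 => simp
  | h i a ha =>
    by_cases hi : i = n
    · subst hi
      rw [DirectSum.decompose_of_mem_same CX.gr ha]
    · rw [DirectSum.decompose_of_mem_ne CX.gr ha hi]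
      have := E_ne hE ha n σ (Ne.symm hi)
      rw [E_eq hE] at this
      rw [this]; simp
  | hadd a b ha hb => simp [ha, hb]

lemma E_inj0 (hE : IsCochainPresentation X CX E) {a : CX.A} (h : ∀ n σ, E a n σ = 0) : a = 0 := by
  have key : ∀ i : ℤ, ((DirectSum.decompose CX.gr a i : CX.gr i) : CX.A) = 0 := by
    intro i
    apply hE.2.2.2.2.2.1 i _ (SetLike.coe_mem _)
    intro n σ
    by_cases hn : (n : ℤ) = i
    · subst hn
      rw [E_decompose hE, h]
    · exact E_ne hE (SetLike.coe_mem _) n σ hn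
  have h2 : DirectSum.decompose CX.gr a = 0 := by
    ext i
    simpa using key i
  simpa using congrArg (DirectSum.decompose CX.gr).symm h2

lemma E_inj (hE : IsCochainPresentation X CX E) {a b : CX.A} (h : ∀ n σ, E a n σ = E b n σ) :
    a = b := by
  rw [← sub_eq_zero]
  apply E_inj0 hE
  intro n σ
  rw [E_eq hE, map_sub, ← E_eq hE, ← E_eq hE, h, sub_self]

lemma mem_gr_of (hE : IsCochainPresentation X CX E) {a : CX.A} {j : ℤ}
    (h : ∀ (n : ℕ) σ, (n : ℤ) ≠ j → E a n σ = 0) : a ∈ CX.gr j := by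
  have : a = ((DirectSum.decompose CX.gr a j : CX.gr j) : CX.A) := by
    apply E_inj hE
    intro n σ
    by_cases hn : (n : ℤ) = j
    · subst hn
      rw [E_decompose hE]
    · rw [h n σ hn, E_ne hE (SetLike.coe_mem _) n σ hn]
  rw [this]
  exact SetLike.coe_mem _

lemma E_bdd (hE : IsCochainPresentation X CX E) (a : CX.A) :
    ∃ N : ℕ, ∀ n, N ≤ n → ∀ σ, E a n σ = 0 := by
  induction a using hom_induction CX with
  | h0 => exact ⟨0, fun n _ σ => by rw [E_eq hE, map_zero]⟩
  | h i a ha =>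
    refine ⟨i.toNat + 1, fun n hn σ => E_ne hE ha n σ (by omega)⟩
  | hadd a b ha hb =>
    obtain ⟨N, hN⟩ := ha
    obtain ⟨M, hM⟩ := hb
    refine ⟨max N M, fun n hn σ => ?_⟩
    rw [hE.1, hN n (le_trans (le_max_left _ _) hn), hM n (le_trans (le_max_right _ _) hn), add_zero]

lemma E_exists (hE : IsCochainPresentation X CX E)
    (S : ∀ n : ℕ, X.obj (Opposite.op (SimplexCategory.mk n)) → k)
    (hS : ∀ (n : ℕ) (i : Fin (n + 1)) (τ : X.obj (Opposite.op (SimplexCategory.mk n))),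
      S (n + 1) (X.map (SimplexCategory.σ i).op τ) = 0)
    (N : ℕ) (hN : ∀ n, N ≤ n → ∀ σ, S n σ = 0) : ∃ a, ∀ n σ, E a n σ = S n σ := by
  have h : ∀ n : ℕ, ∃ a ∈ CX.gr (n : ℤ), ∀ σ, E a n σ = S n σ := by
    intro n
    cases n with
    | zero => exact hE.2.2.2.2.2.2.1 (S 0)
    | succ n =>
      have := hE.2.2.2.2.2.2.2.1 n (S (n + 1)) (hS n)
      push_cast
      exact this
  choose a ha1 ha2 using h
  refine ⟨∑ m ∈ Finset.range N, a m, fun n σ => ?_⟩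
  rw [E_eq hE, map_sum]
  by_cases hn : n < N
  · rw [Finset.sum_eq_single n]
    · exact ha2 n σ
    · intro m _ hm
      exact E_ne hE (ha1 m) n σ (by omega)
    · intro h
      simp at h; omega
  · rw [hN n (by omega)]
    apply Finset.sum_eq_zero
    intro m hm
    simp at hm
    exact E_ne hE (ha1 m) n σ (by omega)

lemma E_d_zero (hE : IsCochainPresentation X CX E) (a : CX.A)
    (σ : X.obj (Opposite.op (SimplexCategory.mk 0))) : E (CX.d a) 0 σ = 0 := by
  induction a using hom_induction CX with
  | h0 => rw [map_zero, E_eq hE, map_zero]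
  | h i a ha =>
    by_cases hi : i < 0
    · rw [gr_neg hE hi ha, map_zero, E_eq hE, map_zero]
    · exact E_ne hE (CX.d_mem i a ha) 0 σ (by push_cast; omega)
  | hadd a b ha hb => rw [map_add, hE.1, ha, hb, add_zero]

lemma E_d_succ (hE : IsCochainPresentation X CX E) (a : CX.A) (n : ℕ)
    (σ : X.obj (Opposite.op (SimplexCategory.mk (n + 1)))) : E (CX.d a) (n + 1) σ =
      ∑ i : Fin (n + 2), (-1) ^ (i : ℕ) * E a n (X.map (SimplexCategory.δ i).op σ) := by
  induction a using hom_induction CX with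
  | h0 =>
    simp only [map_zero]
    simp only [E_eq hE, map_zero, mul_zero, Finset.sum_const_zero]
  | h i a ha =>
    by_cases hi : (n : ℤ) = i
    · subst hi
      rw [hE.2.2.2.2.2.2.2.2.2.2.2 n a ha]
      simp only [sgn_nat]
    · rw [E_ne hE (CX.d_mem i a ha) (n + 1) σ (by push_cast; omega)]
      symm
      apply Finset.sum_eq_zero
      intro r _
      rw [E_ne hE ha n _ hi, mul_zero]
  | hadd a b ha hb =>
    rw [map_add, hE.1, ha, hb, ← Finset.sum_add_distrib]
    apply Finset.sum_congr rfl
    intro r _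
    rw [hE.1, mul_add]

lemma nat_app {X Y : SSet.{u}} (f : X ⟶ Y) {a b : ℕ}
    (θ : SimplexCategory.mk a ⟶ SimplexCategory.mk b)
    (x : X.obj (Opposite.op (SimplexCategory.mk b))) :
    f.app (Opposite.op (SimplexCategory.mk a)) (X.map θ.op x) =
      Y.map θ.op (f.app (Opposite.op (SimplexCategory.mk b)) x) :=
  NatTrans.naturality_apply f θ.op x

variable {Y : SSet.{u}} {CY : DGA k}
  {EY : CY.A → ∀ n : ℕ, Y.obj (Opposite.op (SimplexCategory.mk n)) → k}

lemma mul_induction {A B : DGA k} (φ : A.A → B.A) (hadd : ∀ a b, φ (a + b) = φ a + φ b)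
    (h : ∀ (i j : ℤ) (a b : A.A), a ∈ A.gr i → b ∈ A.gr j → φ (a * b) = φ a * φ b) (a b : A.A) :
    φ (a * b) = φ a * φ b := by
  have h0 : φ 0 = 0 := by simpa using hadd 0 0
  induction a using hom_induction A with
  | h0 => simp [h0]
  | h i a ha =>
    induction b using hom_induction A with
    | h0 => simp [h0]
    | h j b hb => exact h i j a b ha hb
    | hadd b c hb hc => rw [mul_add, hadd, hadd, hb, hc, mul_add]
  | hadd a c hb hc => rw [add_mul, hadd, hadd, hb, hc, add_mul]

lemma exists_pullback (f : X ⟶ Y) (hX : IsCochainPresentation X CX E)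
    (hY : IsCochainPresentation Y CY EY) : ∃ φ : DGAHom CY CX, IsPullbackHom f EY E φ := by
  have h : ∀ a : CY.A, ∃ b : CX.A, ∀ n σ, E b n σ =
      EY a n (f.app (Opposite.op (SimplexCategory.mk n)) σ) := by
    intro a
    obtain ⟨N, hN⟩ := E_bdd hY a
    apply E_exists hX _ _ N
    · intro n hn σ; exact hN n hn _
    · intro n i τ
      rw [nat_app, E_deg hY]
  choose φ hφ using h
  have hadd : ∀ a b, φ (a + b) = φ a + φ b := by
    intro a b
    apply E_inj hX
    intro n σ
    rw [hφ, hX.1, hφ, hφ, hY.1]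
  have hgr : ∀ (i : ℤ), ∀ a ∈ CY.gr i, φ a ∈ CX.gr i := by
    intro i a ha
    apply mem_gr_of hX
    intro n σ hn
    rw [hφ, E_ne hY ha n _ hn]
  have hmul : ∀ a b, φ (a * b) = φ a * φ b := by
    apply mul_induction φ hadd
    intro i j a b ha hb
    have h0 : φ 0 = 0 := by simpa using hadd 0 0
    by_cases hi : i < 0
    · rw [gr_neg hY hi ha]; simp [h0]
    by_cases hj : j < 0
    · rw [gr_neg hY hj hb]; simp [h0]
    obtain ⟨p, rfl⟩ := Int.eq_ofNat_of_zero_le (not_lt.mp hi)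
    obtain ⟨q, rfl⟩ := Int.eq_ofNat_of_zero_le (not_lt.mp hj)
    apply E_inj hX
    intro n σ
    rw [hφ]
    by_cases hn : n = p + q
    · subst hn
      rw [E_mul hY p q ha hb, E_mul hX p q (hgr _ _ ha) (hgr _ _ hb), hφ, hφ, nat_app, nat_app]
    · rw [E_ne hY (SetLike.mul_mem_graded ha hb) n _ (by omega),
        E_ne hX (SetLike.mul_mem_graded (hgr _ _ ha) (hgr _ _ hb)) n _ (by omega)]
  have hsmul : ∀ (c : k) a, φ (c • a) = c • φ a := by
    intro c a
    apply E_inj hX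
    intro n σ
    rw [hφ, hX.2.1, hφ, hY.2.1]
  have hone : φ 1 = 1 := by
    apply E_inj hX
    intro n σ
    rw [hφ]
    cases n with
    | zero => rw [E_one_zero hX, E_one_zero hY]
    | succ n => rw [E_one_succ hX, E_one_succ hY]
  let L : CY.A →ₗ[k] CX.A := { toFun := φ, map_add' := hadd, map_smul' := hsmul }
  refine ⟨⟨AlgHom.ofLinearMap L hone hmul, hgr, ?_⟩, hφ⟩
  intro a
  show φ (CY.d a) = CX.d (φ a)
  apply E_inj hX
  intro n σ
  rw [hφ]
  cases n with
  | zero => rw [E_d_zero hX, E_d_zero hY]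
  | succ n =>
    rw [E_d_succ hX, E_d_succ hY]
    apply Finset.sum_congr rfl
    intro r _
    rw [hφ, nat_app]

lemma DGAHom_ext {A B : DGA k} {φ ψ : DGAHom A B} (h : ∀ a, φ.toFun a = ψ.toFun a) : φ = ψ := by
  cases φ; cases ψ
  congr
  exact AlgHom.ext h

lemma pullback_unique {f : X ⟶ Y} (hX : IsCochainPresentation X CX E)
    {φ ψ : DGAHom CY CX} (h1 : IsPullbackHom f EY E φ) (h2 : IsPullbackHom f EY E ψ) : φ = ψ := by
  apply DGAHom_ext
  intro a
  apply E_inj hX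
  intro n σ
  rw [h1, h2]

end Pres

section Conv

/-- comparison of the two models of the topological simplex -/
def toTS (n : ℕ) : C((SimplexCategory.toTop.{0}.obj (SimplexCategory.mk n) : TopCat), TopSimplex n) where
  toFun s := ⟨s.down.1, s.down.2⟩
  continuous_toFun := by
    apply Continuous.subtype_mk
    exact continuous_subtype_val.comp continuous_uliftDown

/-- comparison of the two models of singular simplices of the interval -/
noncomputable def conv {n : ℕ} (τ : SingN unitInterval n) :
    Iset.obj (Opposite.op (SimplexCategory.mk n)) :=
  ULift.up (TopCat.ofHom (ContinuousMap.comp τ (toTS n)))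

lemma toTS_map {m n : ℕ} (θ : SimplexCategory.mk m ⟶ SimplexCategory.mk n)
    (s : (SimplexCategory.toTop.{0}.obj (SimplexCategory.mk m) : TopCat)) :
    toTS n (SimplexCategory.toTop.{0}.map θ s) =
      vertAffine (fun j => (θ.toOrderHom j : Fin (n + 1))) (toTS m s) := by
  apply Subtype.ext
  funext j
  exact FunOnFinite.linearMap_apply_apply ℝ ℝ _ _ j

lemma conv_map {m n : ℕ} (θ : SimplexCategory.mk m ⟶ SimplexCategory.mk n)
    (v : Fin (m + 1) → Fin (n + 1)) (hv : ∀ j, (θ.toOrderHom j : Fin (n + 1)) = v j)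
    (τ : SingN unitInterval n) :
    conv (ContinuousMap.comp τ (vertAffine v) : SingN unitInterval m) = Iset.map θ.op (conv τ) := by
  obtain rfl : (fun j => (θ.toOrderHom j : Fin (n + 1))) = v := funext hv
  apply ULift.down_injective
  apply ConcreteCategory.hom_ext
  intro s
  exact congrArg (DFunLike.coe (F := C(TopSimplex n, unitInterval)) τ) (toTS_map θ s).symm

lemma conv_degen {n : ℕ} (i : Fin (n + 1)) (τ : SingN unitInterval n) :
    conv (ContinuousMap.comp τ (degenMap i) : SingN unitInterval (n + 1)) =
      Iset.map (SimplexCategory.σ i).op (conv τ) :=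
  conv_map (SimplexCategory.σ i) _ (fun _ => rfl) τ

lemma conv_face {n : ℕ} (i : Fin (n + 2)) (τ : SingN unitInterval (n + 1)) :
    conv (ContinuousMap.comp τ (faceMap i) : SingN unitInterval n) =
      Iset.map (SimplexCategory.δ i).op (conv τ) :=
  conv_map (SimplexCategory.δ i) _ (fun _ => rfl) τ

lemma conv_front {p n : ℕ} (h : p ≤ n) (τ : SingN unitInterval n) :
    conv (ContinuousMap.comp τ (frontMap p n h) : SingN unitInterval p) =
      Iset.map (frontHom p n h).op (conv τ) :=
  conv_map (frontHom p n h) _ (fun _ => rfl) τ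

lemma conv_back {q n : ℕ} (h : q ≤ n) (τ : SingN unitInterval n) :
    conv (ContinuousMap.comp τ (backMap q n h) : SingN unitInterval q) =
      Iset.map (backHom q n h).op (conv τ) :=
  conv_map (backHom q n h) _ (fun _ => rfl) τ

lemma conv_const0 {m : ℕ} (θ : SimplexCategory.mk m ⟶ SimplexCategory.mk 0) :
    Iset.map θ.op (conv const0) = constSimp 0 (Opposite.op (SimplexCategory.mk m)) := rfl

lemma conv_const1 {m : ℕ} (θ : SimplexCategory.mk m ⟶ SimplexCategory.mk 0) :
    Iset.map θ.op (conv const1) = constSimp 1 (Opposite.op (SimplexCategory.mk m)) := rfl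

end Conv

section Homotopy

universe u
variable {k : Type} [CommRing k] {X Y : SSet.{u}} {T : SSet.{0}} {CX CY : DGA k}
  {EX : CX.A → ∀ n : ℕ, X.obj (Opposite.op (SimplexCategory.mk n)) → k}
  {EY : CY.A → ∀ n : ℕ, Y.obj (Opposite.op (SimplexCategory.mk n)) → k}

lemma K_add {i : ℕ} (m n : ℕ)
    (w w' w'' : X.obj (Opposite.op (SimplexCategory.mk i)) →
      T.obj (Opposite.op (SimplexCategory.mk i)) → k)
    (h : ∀ x t, w'' x t = w x t + w' x t) (x : X.obj (Opposite.op (SimplexCategory.mk m)))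
    (t : T.obj (Opposite.op (SimplexCategory.mk n))) :
    K m n w'' x t = K m n w x t + K m n w' x t := by
  unfold K
  rw [← P_add]
  apply P_congr'
  intro l _
  exact h _ _

lemma K_smul {i : ℕ} (m n : ℕ) (c : k)
    (w w'' : X.obj (Opposite.op (SimplexCategory.mk i)) →
      T.obj (Opposite.op (SimplexCategory.mk i)) → k)
    (h : ∀ x t, w'' x t = c * w x t) (x : X.obj (Opposite.op (SimplexCategory.mk m)))
    (t : T.obj (Opposite.op (SimplexCategory.mk n))) :
    K m n w'' x t = c * K m n w x t := by
  unfold K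
  rw [← P_smul]
  apply P_congr'
  intro l _
  exact h _ _

lemma K_zero {i : ℕ} (m n : ℕ)
    (w : X.obj (Opposite.op (SimplexCategory.mk i)) →
      T.obj (Opposite.op (SimplexCategory.mk i)) → k)
    (h : ∀ x t, w x t = 0) (x : X.obj (Opposite.op (SimplexCategory.mk m)))
    (t : T.obj (Opposite.op (SimplexCategory.mk n))) :
    K m n w x t = 0 := by
  simpa using K_smul m n 0 w w (by simp [h]) x t

/-- pullback of a cochain along a homotopy -/
def W (EY : CY.A → ∀ n : ℕ, Y.obj (Opposite.op (SimplexCategory.mk n)) → k)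
    (h : sprod X T ⟶ Y) (a : CY.A) (i : ℕ) (x : X.obj (Opposite.op (SimplexCategory.mk i)))
    (t : T.obj (Opposite.op (SimplexCategory.mk i))) : k :=
  EY a i (h.app (Opposite.op (SimplexCategory.mk i)) (x, t))

lemma W_map (h : sprod X T ⟶ Y) (a : CY.A) {i j : ℕ}
    (θ : SimplexCategory.mk i ⟶ SimplexCategory.mk j)
    (x : X.obj (Opposite.op (SimplexCategory.mk j)))
    (t : T.obj (Opposite.op (SimplexCategory.mk j))) :
    W EY h a i (X.map θ.op x) (T.map θ.op t) =
      EY a i (Y.map θ.op (h.app (Opposite.op (SimplexCategory.mk j)) (x, t))) :=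
  congrArg (EY a i) (nat_app h θ (x, t))

lemma exists_H (h : sprod X T ⟶ Y) (hX : IsCochainPresentation X CX EX)
    (hY : IsCochainPresentation Y CY EY) :
    ∃ H : CY.A → ∀ n : ℕ, T.obj (Opposite.op (SimplexCategory.mk n)) → CX.A,
      ∀ a n t m x i, m + n = i → EX (H a n t) m x = K m n (W EY h a i) x t := by
  have : ∀ (a : CY.A) (n : ℕ) (t : T.obj (Opposite.op (SimplexCategory.mk n))), ∃ b : CX.A,
      ∀ m x, EX b m x = K m n (W EY h a (m + n)) x t := by
    intro a n t
    obtain ⟨N, hN⟩ := E_bdd hY a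
    apply E_exists hX _ _ N
    · intro m hm x
      apply K_zero
      intro x t
      exact hN _ (by omega) _
    · intro m r τ
      have key : ∀ i, i = m + n + 1 →
          K (m + 1) n (W EY h a i) (X.map (SimplexCategory.σ r).op τ) t = 0 := by
        rintro i rfl
        apply K_deg_left m n rfl
        intro c x t
        rw [W_map, E_deg hY]
      exact key _ (by omega)
  choose H hH using this
  refine ⟨H, ?_⟩
  rintro a n t m x i rfl
  exact hH a n t m x

lemma E_mul' (hE : IsCochainPresentation X CX EX) (p q m : ℕ) (hm : p + q = m) {a b : CX.A}
    (ha : a ∈ CX.gr (p : ℤ))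
    (hb : b ∈ CX.gr (q : ℤ)) (σ : X.obj (Opposite.op (SimplexCategory.mk m))) :
    EX (a * b) m σ =
      EX a p (X.map (frontHom p m (by omega)).op σ) *
        EX b q (X.map (backHom q m (by omega)).op σ) := by
  subst hm
  exact E_mul hE p q ha hb σ

lemma H_add {h : sprod X T ⟶ Y} (hX : IsCochainPresentation X CX EX)
    (hY : IsCochainPresentation Y CY EY)
    {H : CY.A → ∀ n : ℕ, T.obj (Opposite.op (SimplexCategory.mk n)) → CX.A}
    (hH : ∀ a n t m x i, m + n = i → EX (H a n t) m x = K m n (W EY h a i) x t)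
    (a b : CY.A) (n : ℕ) (t : T.obj (Opposite.op (SimplexCategory.mk n))) :
    H (a + b) n t = H a n t + H b n t := by
  apply E_inj hX
  intro m x
  rw [hX.1, hH _ _ _ _ _ _ rfl, hH _ _ _ _ _ _ rfl, hH _ _ _ _ _ _ rfl]
  apply K_add
  intro x t
  exact hY.1 _ _ _ _

lemma H_smul {h : sprod X T ⟶ Y} (hX : IsCochainPresentation X CX EX)
    (hY : IsCochainPresentation Y CY EY)
    {H : CY.A → ∀ n : ℕ, T.obj (Opposite.op (SimplexCategory.mk n)) → CX.A}
    (hH : ∀ a n t m x i, m + n = i → EX (H a n t) m x = K m n (W EY h a i) x t)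
    (c : k) (a : CY.A) (n : ℕ) (t : T.obj (Opposite.op (SimplexCategory.mk n))) :
    H (c • a) n t = c • H a n t := by
  apply E_inj hX
  intro m x
  rw [hX.2.1, hH _ _ _ _ _ _ rfl, hH _ _ _ _ _ _ rfl]
  apply K_smul
  intro x t
  exact hY.2.1 _ _ _ _

lemma H_zero {h : sprod X T ⟶ Y} (hX : IsCochainPresentation X CX EX)
    (hY : IsCochainPresentation Y CY EY)
    {H : CY.A → ∀ n : ℕ, T.obj (Opposite.op (SimplexCategory.mk n)) → CX.A}
    (hH : ∀ a n t m x i, m + n = i → EX (H a n t) m x = K m n (W EY h a i) x t)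
    (n : ℕ) (t : T.obj (Opposite.op (SimplexCategory.mk n))) : H 0 n t = 0 := by
  simpa using H_smul hX hY hH 0 0 n t

lemma H_deg {h : sprod X T ⟶ Y} (hX : IsCochainPresentation X CX EX)
    (hY : IsCochainPresentation Y CY EY)
    {H : CY.A → ∀ n : ℕ, T.obj (Opposite.op (SimplexCategory.mk n)) → CX.A}
    (hH : ∀ a n t m x i, m + n = i → EX (H a n t) m x = K m n (W EY h a i) x t)
    (a : CY.A) (n : ℕ) (r : Fin (n + 1))
    (t : T.obj (Opposite.op (SimplexCategory.mk n))) :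
    H a (n + 1) (T.map (SimplexCategory.σ r).op t) = 0 := by
  apply E_inj0 hX
  intro m x
  rw [hH _ (n + 1) _ m _ (m + n + 1) rfl]
  apply K_deg_right m n rfl
  intro c x t
  rw [W_map, E_deg hY]

lemma H_gr {h : sprod X T ⟶ Y} (hX : IsCochainPresentation X CX EX)
    (hY : IsCochainPresentation Y CY EY)
    {H : CY.A → ∀ n : ℕ, T.obj (Opposite.op (SimplexCategory.mk n)) → CX.A}
    (hH : ∀ a n t m x i, m + n = i → EX (H a n t) m x = K m n (W EY h a i) x t)
    (i : ℤ) (a : CY.A) (ha : a ∈ CY.gr i) (n : ℕ)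
    (t : T.obj (Opposite.op (SimplexCategory.mk n))) : H a n t ∈ CX.gr (i - (n : ℤ)) := by
  apply mem_gr_of hX
  intro m x hm
  rw [hH _ _ _ _ _ _ rfl]
  apply K_zero
  intro x t
  exact E_ne hY ha _ _ (by push_cast; omega)

lemma H_one_zero {h : sprod X T ⟶ Y} (hX : IsCochainPresentation X CX EX)
    (hY : IsCochainPresentation Y CY EY)
    {H : CY.A → ∀ n : ℕ, T.obj (Opposite.op (SimplexCategory.mk n)) → CX.A}
    (hH : ∀ a n t m x i, m + n = i → EX (H a n t) m x = K m n (W EY h a i) x t)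
    (t : T.obj (Opposite.op (SimplexCategory.mk 0))) : H 1 0 t = 1 := by
  apply E_inj hX
  intro m x
  rw [hH _ _ _ _ _ m rfl]
  obtain ⟨θ, e⟩ := K_zero_right m (W EY h 1 m) x t
  rw [e]
  cases m with
  | zero => rw [E_one_zero hX]; exact E_one_zero hY _
  | succ m => rw [E_one_succ hX]; exact E_one_succ hY _ _

lemma H_one_succ {h : sprod X T ⟶ Y} (hX : IsCochainPresentation X CX EX)
    (hY : IsCochainPresentation Y CY EY)
    {H : CY.A → ∀ n : ℕ, T.obj (Opposite.op (SimplexCategory.mk n)) → CX.A}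
    (hH : ∀ a n t m x i, m + n = i → EX (H a n t) m x = K m n (W EY h a i) x t)
    (n : ℕ) (t : T.obj (Opposite.op (SimplexCategory.mk (n + 1)))) :
    H 1 (n + 1) t = 0 := by
  apply E_inj0 hX
  intro m x
  rw [hH _ (n + 1) _ m _ (m + n + 1) rfl]
  apply K_zero
  intro x t
  exact E_one_succ hY _ _

lemma H_mul {h : sprod X T ⟶ Y} (hX : IsCochainPresentation X CX EX)
    (hY : IsCochainPresentation Y CY EY)
    {H : CY.A → ∀ n : ℕ, T.obj (Opposite.op (SimplexCategory.mk n)) → CX.A}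
    (hH : ∀ a n t m x i, m + n = i → EX (H a n t) m x = K m n (W EY h a i) x t)
    (i j : ℤ) (a : CY.A) (ha : a ∈ CY.gr i) (b : CY.A) (hb : b ∈ CY.gr j) (n : ℕ)
    (t : T.obj (Opposite.op (SimplexCategory.mk n))) :
    H (a * b) n t =
      ∑ p : Fin (n + 1),
        (((-1 : ℤˣ) ^ (((p : ℕ) : ℤ) * (j - ((n : ℤ) - ((p : ℕ) : ℤ)))) : ℤˣ) : ℤ) •
          (H a (p : ℕ) (T.map (frontHom (p : ℕ) n (Nat.le_of_lt_succ p.isLt)).op t) *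
            H b (n - (p : ℕ)) (T.map (backHom (n - (p : ℕ)) n (by omega)).op t)) := by
  by_cases hi : i < 0
  · rw [gr_neg hY hi ha]
    simp [H_zero hX hY hH]
  by_cases hj : j < 0
  · rw [gr_neg hY hj hb]
    simp [H_zero hX hY hH]
  obtain ⟨i, rfl⟩ := Int.eq_ofNat_of_zero_le (not_lt.mp hi)
  obtain ⟨j, rfl⟩ := Int.eq_ofNat_of_zero_le (not_lt.mp hj)
  have gmem : ∀ p : Fin (n + 1),
      (H a (p : ℕ) (T.map (frontHom (p : ℕ) n (Nat.le_of_lt_succ p.isLt)).op t) *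
        H b (n - (p : ℕ)) (T.map (backHom (n - (p : ℕ)) n (by omega)).op t)) ∈
        CX.gr ((i : ℤ) + j - n) := by
    intro p
    have := SetLike.mul_mem_graded (H_gr hX hY hH _ a ha p
      (T.map (frontHom (p : ℕ) n (Nat.le_of_lt_succ p.isLt)).op t))
      (H_gr hX hY hH _ b hb (n - p) (T.map (backHom (n - (p : ℕ)) n (by omega)).op t))
    have e : (i : ℤ) - ((p : ℕ) : ℤ) + (j - ((n - p : ℕ) : ℤ)) = (i : ℤ) + j - n := by
      omega
    rwa [e] at this
  apply E_inj hX
  intro m x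
  rw [E_eq hX (∑ _, _), map_sum]
  simp only [map_zsmul]
  by_cases hm : m + n = i + j
  · rw [hH _ _ _ _ _ _ hm]
    rw [K_cut (W EY h a i) m n hm (W EY h b j) (W EY h (a * b) (i + j)) (by
      intro x t
      rw [W_map, W_map]
      exact E_mul hY i j ha hb _)]
    rw [← Finset.Nat.sum_antidiagonal_swap, Finset.Nat.sum_antidiagonal_eq_sum_range_succ_mk]
    dsimp only [Prod.swap]
    set g : ℕ → k := fun p => if hp : p ≤ i ∧ i - p ≤ m ∧ p ≤ n then
      (-1) ^ (p * (m - (i - p))) *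
          (K (i - p) p (W EY h a i) (X.map (frontHom (i - p) m hp.2.1).op x)
            (T.map (frontHom p n hp.2.2).op t) *
           K (m - (i - p)) (n - p) (W EY h b j)
            (X.map (backHom (m - (i - p)) m (by omega)).op x)
            (T.map (backHom (n - p) n (by omega)).op t)) else 0 with hg
    have hg0 : ∀ p, ¬ (p ≤ i ∧ p ≤ n) → g p = 0 := by
      intro p hp
      rw [hg]
      dsimp only
      rw [dif_neg]
      tauto
    trans ∑ p ∈ Finset.range (i + 1), g p
    · apply Finset.sum_congr rfl
      intro p hp
      have hpi : p ≤ i := by simp at hp; omega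
      rw [hg]
      dsimp only
      by_cases hc : i - p ≤ m ∧ p ≤ n
      · rw [dif_pos hc, dif_pos ⟨hpi, hc⟩]
      · rw [dif_neg hc, dif_neg (fun hh => hc hh.2)]
    trans ∑ p ∈ Finset.range (n + 1), g p
    · trans ∑ p ∈ Finset.range (i + n + 1), g p
      · apply Finset.sum_subset
        · intro p hp; simp at hp ⊢; omega
        · intro p _ hp; apply hg0; simp at hp; omega
      · symm
        apply Finset.sum_subset
        · intro p hp; simp at hp ⊢; omega
        · intro p _ hp; apply hg0; simp at hp; omega
    rw [Finset.sum_range]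
    apply Finset.sum_congr rfl
    intro p _
    rw [← E_eq hX]
    by_cases hp : (p : ℕ) ≤ i ∧ i - p ≤ m ∧ (p : ℕ) ≤ n
    · rw [hg]
      dsimp only
      rw [dif_pos hp]
      have hA := H_gr hX hY hH _ a ha p
        (T.map (frontHom (p : ℕ) n (Nat.le_of_lt_succ p.isLt)).op t)
      have hB := H_gr hX hY hH _ b hb (n - p) (T.map (backHom (n - (p : ℕ)) n (by omega)).op t)
      have e1 : (i : ℤ) - ((p : ℕ) : ℤ) = ((i - p : ℕ) : ℤ) := by omega
      have e2 : (j : ℤ) - ((n - p : ℕ) : ℤ) = ((m - (i - p) : ℕ) : ℤ) := by omega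
      have e3 : (j : ℤ) - ((n : ℤ) - ((p : ℕ) : ℤ)) = ((m - (i - p) : ℕ) : ℤ) := by omega
      rw [e1] at hA
      rw [e2] at hB
      rw [E_mul' hX (i - p) (m - (i - p)) m (by omega) hA hB, e3, ← Nat.cast_mul, zpow_natCast,
        sgn_nat, hH _ _ _ _ _ i (by omega), hH _ _ _ _ _ j (by omega)]
    · rw [hg]
      dsimp only
      rw [dif_neg hp]
      have : (p : ℕ) ≤ n := by omega
      by_cases hpi : (p : ℕ) ≤ i
      · rw [gr_neg hX (by omega) (H_gr hX hY hH _ b hb (n - p) (T.map (backHom (n - (p : ℕ)) n (by omega)).op t))]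
        rw [mul_zero, E_eq hX, map_zero, smul_zero]
      · rw [gr_neg hX (by omega) (H_gr hX hY hH _ a ha p
          (T.map (frontHom (p : ℕ) n (Nat.le_of_lt_succ p.isLt)).op t))]
        rw [zero_mul, E_eq hX, map_zero, smul_zero]
  · rw [hH _ _ _ _ _ _ rfl, K_zero]
    · symm
      apply Finset.sum_eq_zero
      intro p _
      rw [← E_eq hX, E_ne hX (gmem p) m x (by omega), smul_zero]
    · intro x t
      exact E_ne hY (SetLike.mul_mem_graded ha hb) _ _ (by push_cast; omega)

lemma W_d {h : sprod X T ⟶ Y} (hY : IsCochainPresentation Y CY EY)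
    (a : CY.A) (i : ℕ) (x : X.obj (Opposite.op (SimplexCategory.mk (i + 1))))
    (t : T.obj (Opposite.op (SimplexCategory.mk (i + 1)))) :
    W EY h (CY.d a) (i + 1) x t = ∑ r : Fin (i + 2), (-1) ^ (r : ℕ) *
      W EY h a i (X.map (SimplexCategory.δ r).op x) (T.map (SimplexCategory.δ r).op t) := by
  refine (E_d_succ hY a i _).trans ?_
  apply Finset.sum_congr rfl
  intro r _
  rw [W_map]

lemma H_d_zero {h : sprod X T ⟶ Y} (hX : IsCochainPresentation X CX EX)
    (hY : IsCochainPresentation Y CY EY)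
    {H : CY.A → ∀ n : ℕ, T.obj (Opposite.op (SimplexCategory.mk n)) → CX.A}
    (hH : ∀ a n t m x i, m + n = i → EX (H a n t) m x = K m n (W EY h a i) x t)
    (a : CY.A) (t : T.obj (Opposite.op (SimplexCategory.mk 0))) :
    H (CY.d a) 0 t = CX.d (H a 0 t) := by
  apply E_inj hX
  intro m x
  rw [hH _ _ _ _ _ m rfl]
  cases m with
  | zero =>
    rw [E_d_zero hX]
    obtain ⟨θ, e⟩ := K_zero_right 0 (W EY h (CY.d a) 0) x t
    rw [e]
    exact E_d_zero hY _ _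
  | succ m =>
    rw [E_d_succ hX, K_D (W EY h a m) (m + 1) 0 rfl _ (W_d hY a m), D_right_zero,
      D_left_succ _ _ _ rfl, mul_zero, add_zero]
    apply Finset.sum_congr rfl
    intro r _
    rw [hH _ _ _ _ _ m rfl]

lemma H_d_succ {h : sprod X T ⟶ Y} (hX : IsCochainPresentation X CX EX)
    (hY : IsCochainPresentation Y CY EY)
    {H : CY.A → ∀ n : ℕ, T.obj (Opposite.op (SimplexCategory.mk n)) → CX.A}
    (hH : ∀ a n t m x i, m + n = i → EX (H a n t) m x = K m n (W EY h a i) x t)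
    (i : ℤ) (a : CY.A) (ha : a ∈ CY.gr i) (n : ℕ)
    (t : T.obj (Opposite.op (SimplexCategory.mk (n + 1)))) :
    H (CY.d a) (n + 1) t =
        CX.d (H a (n + 1) t) +
          (((-1 : ℤˣ) ^ (i - (n : ℤ)) : ℤˣ) : ℤ) •
            ∑ i' : Fin (n + 2), (((-1 : ℤˣ) ^ (i' : ℕ) : ℤˣ) : ℤ) •
              H a n (T.map (SimplexCategory.δ i').op t) := by
  apply E_inj hX
  intro m x
  rw [hX.1, E_eq hX (_ • _), map_zsmul, map_sum]
  simp only [map_zsmul, sgn_nat]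
  simp only [← E_eq hX]
  rw [hH _ (n + 1) _ m _ (m + n + 1) rfl,
    K_D (W EY h a (m + n)) m (n + 1) rfl _ (W_d hY a (m + n)), D_right_succ _ _ _ rfl]
  congr 1
  · cases m with
    | zero => rw [E_d_zero hX, D_left_zero]
    | succ m =>
      rw [E_d_succ hX, D_left_succ _ _ _ (by omega)]
      apply Finset.sum_congr rfl
      intro r _
      rw [hH _ _ _ _ _ (m + 1 + n) (by omega)]
  · have e : ∀ i' : Fin (n + 2), EX (H a n (T.map (SimplexCategory.δ i').op t)) m x =
        K m n (W EY h a (m + n)) x (T.map (SimplexCategory.δ i').op t) :=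
      fun i' => hH _ _ _ _ _ _ rfl
    simp only [e]
    by_cases hm : (m : ℤ) + n = i
    · rw [sgn_eq (i - n) m (by rw [← hm]; simp), sgn_nat]
    · have : ∀ i' : Fin (n + 2), K m n (W EY h a (m + n)) x (T.map (SimplexCategory.δ i').op t) = 0 := by
        intro i'
        apply K_zero
        intro x t
        exact E_ne hY ha _ _ (by push_cast; omega)
      simp [this]

theorem elem_homotopy {f g : X ⟶ Y} (hfg : SimpElemStrongHomotopy f g)
    (hX : IsCochainPresentation X CX EX) (hY : IsCochainPresentation Y CY EY)
    {φf φg : DGAHom CY CX} (hf : IsPullbackHom f EY EX φf) (hg : IsPullbackHom g EY EX φg) :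
    ∃ H, IsElemStrongHomotopy CY CX φf.toFun φg.toFun H := by
  obtain ⟨h, h0, h1⟩ := hfg
  obtain ⟨H, hH⟩ := exists_H h hX hY
  refine ⟨fun a n σ => H a n (conv σ), fun a b n σ => H_add hX hY hH a b n _,
    fun c a n σ => H_smul hX hY hH c a n _, ?_, fun i a ha n σ => H_gr hX hY hH i a ha n _,
    fun σ => H_one_zero hX hY hH _, fun n σ => H_one_succ hX hY hH n _, ?_, ?_, ?_⟩
  · intro a n i τ
    dsimp only
    rw [conv_degen, H_deg hX hY hH]
  · intro i j a ha b hb n σ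
    simp only [conv_front, conv_back]
    exact H_mul hX hY hH i j a ha b hb n _
  · intro i a ha
    refine ⟨fun σ => H_d_zero hX hY hH a _, ?_⟩
    intro n σ
    simp only [conv_face]
    exact H_d_succ hX hY hH i a ha n _
  · intro a
    constructor
    · apply E_inj hX
      intro m x
      rw [hf, hH _ _ _ _ _ m rfl, ← h0]
      obtain ⟨θ, e⟩ := K_zero_right m (W EY h a m) x (conv const0)
      rw [e, conv_const0]
      rfl
    · apply E_inj hX
      intro m x
      rw [hg, hH _ _ _ _ _ m rfl, ← h1]
      obtain ⟨θ, e⟩ := K_zero_right m (W EY h a m) x (conv const1)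
      rw [e, conv_const1]
      rfl

theorem homotopic_pullback {f g : X ⟶ Y} (hfg : SimpStronglyHomotopic f g)
    (hX : IsCochainPresentation X CX EX) (hY : IsCochainPresentation Y CY EY) :
    ∀ {φf φg : DGAHom CY CX}, IsPullbackHom f EY EX φf → IsPullbackHom g EY EX φg →
      StronglyHomotopicHoms CY CX φf φg := by
  induction hfg with
  | rel f g h => exact fun hf hg => Relation.EqvGen.rel _ _ (elem_homotopy h hX hY hf hg)
  | refl f =>
    intro φf φg hf hg
    rw [pullback_unique hX hf hg]
    exact Relation.EqvGen.refl _
  | symm f g _ ih => exact fun hf hg => Relation.EqvGen.symm _ _ (ih hg hf)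
  | trans f g e _ _ ih1 ih2 =>
    intro φf φg hf hg
    obtain ⟨ψ, hψ⟩ := exists_pullback g hX hY
    exact Relation.EqvGen.trans _ _ _ (ih1 hf hψ) (ih2 hψ hg)

end Homotopy
end EZ

/-- **Theorem.** Let `f, g : X → Y` be maps of simplicial sets.  If `f` and `g` are
strongly homotopic, then the induced maps of (pseudo-compact) normalized cochain dg
algebras `f*, g* : C*(Y) → C*(X)` are strongly homotopic.  Consequently, if two
simplicial sets `X` and `Y` are strongly homotopy equivalent, then the dg algebras
`C*(X)` and `C*(Y)` are strongly homotopy equivalent. -/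
theorem strongly_homotopic_simplicial_maps_induce_strongly_homotopic_cochain_maps
    {k : Type} [CommRing k] :
    (∀ (X Y : SSet) (f g : X ⟶ Y), SimpStronglyHomotopic f g →
      ∀ (CX CY : DGA k)
        (EX : CX.A → ∀ n : ℕ, X.obj (Opposite.op (SimplexCategory.mk n)) → k)
        (EY : CY.A → ∀ n : ℕ, Y.obj (Opposite.op (SimplexCategory.mk n)) → k),
        IsCochainPresentation X CX EX → IsCochainPresentation Y CY EY →
        ∀ (φf φg : DGAHom CY CX),
          IsPullbackHom f EY EX φf → IsPullbackHom g EY EX φg →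
          StronglyHomotopicHoms CY CX φf φg) ∧
    (∀ (X Y : SSet), SimpStronglyHomotopyEquivalent X Y →
      ∀ (CX CY : DGA k)
        (EX : CX.A → ∀ n : ℕ, X.obj (Opposite.op (SimplexCategory.mk n)) → k)
        (EY : CY.A → ∀ n : ℕ, Y.obj (Opposite.op (SimplexCategory.mk n)) → k),
        IsCochainPresentation X CX EX → IsCochainPresentation Y CY EY →
        StronglyHomotopyEquivalent CX CY) := by
  refine ⟨fun X Y f g hfg CX CY EX EY hX hY φf φg hf hg =>
    EZ.homotopic_pullback hfg hX hY hf hg, ?_⟩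
  rintro X Y ⟨f, g, h1, h2⟩ CX CY EX EY hX hY
  obtain ⟨φ, hφ⟩ := EZ.exists_pullback f hX hY
  obtain ⟨ψ, hψ⟩ := EZ.exists_pullback g hY hX
  refine ⟨ψ, φ, ?_, ?_⟩
  · refine EZ.homotopic_pullback h1 hY hY (fun a n σ => ?_) (fun a n σ => rfl)
    exact (hψ _ n σ).trans (hφ a n _)
  · refine EZ.homotopic_pullback h2 hX hX (fun a n σ => ?_) (fun a n σ => rfl)
    exact (hφ _ n σ).trans (hψ a n _)
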